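/- Let η be a quadratic irrational, 0 < a < b < 1, and C > 0. Let J_{3,1}(N) be the number of representations N = p₁ + p₂ + p₃ with each pᵢ prime and a < {ηpᵢ} < b, and let I_{3,1}(N) be the total number of representations of N as a sum of three primes. Then J_{3,1}(N) = I_{3,1}(N) σ(N,a,b) + O(N² (log N)^{−C}), where σ(N,a,b) = Σ_{m∈ℤ} e^{2πim(ηN − 1.5(a+b))} sin³(πm(b−a))/(π³m³) (with (b−a)³ as the m=0 term). -/

import Mathlib

open Finset

def IsQuadraticIrrational (η : ℝ) : Prop :=
  Irrational η ∧ ∃ A B C : ℤ, A ≠ 0 ∧ (A : ℝ) * η ^ 2 + B * η + C = 0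

def primesUpTo (N : ℕ) : Finset ℕ := (Finset.range (N + 1)).filter Nat.Prime

/-- Number of representations N = p₁+p₂+p₃ with pᵢ prime and a < {ηpᵢ} < b. -/
noncomputable def J31 (η a b : ℝ) (N : ℕ) : ℕ :=
  ((primesUpTo N ×ˢ primesUpTo N ×ˢ primesUpTo N).filter fun t =>
      t.1 + t.2.1 + t.2.2 = N ∧
      (a < Int.fract (η * t.1) ∧ Int.fract (η * t.1) < b) ∧
      (a < Int.fract (η * t.2.1) ∧ Int.fract (η * t.2.1) < b) ∧
      (a < Int.fract (η * t.2.2) ∧ Int.fract (η * t.2.2) < b)).card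

/-- Total number of representations of N as a sum of three primes. -/
def I31 (N : ℕ) : ℕ :=
  ((primesUpTo N ×ˢ primesUpTo N ×ˢ primesUpTo N).filter fun t =>
      t.1 + t.2.1 + t.2.2 = N).card

noncomputable def sigmaTerm (η a b : ℝ) (N : ℕ) (m : ℤ) : ℂ :=
  if m = 0 then ((b - a) ^ 3 : ℝ)
  else Complex.exp (2 * Real.pi * Complex.I * m * (η * N - 1.5 * (a + b)))
        * (Real.sin (Real.pi * m * (b - a)) ^ 3 / (Real.pi ^ 3 * (m : ℝ) ^ 3))

noncomputable def sigmaSeries (η a b : ℝ) (N : ℕ) : ℂ := ∑' m : ℤ, sigmaTerm η a b N m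


/-- The additive character `e(x) = exp(2πix)`. -/
noncomputable def ee (x : ℝ) : ℂ := Complex.exp (2 * Real.pi * Complex.I * x)

/-- Distance to the nearest integer. -/
noncomputable def dn (x : ℝ) : ℝ := |x - round x|

lemma ee_eq (x : ℝ) : ee x = Complex.exp (Complex.I * ((2 * Real.pi * x : ℝ) : ℂ)) := by
  unfold ee; congr 1; push_cast; ring

lemma ee_add (x y : ℝ) : ee (x + y) = ee x * ee y := by
  unfold ee; rw [← Complex.exp_add]; congr 1; push_cast; ring

lemma ee_zero : ee 0 = 1 := by simp [ee]

lemma norm_ee (x : ℝ) : ‖ee x‖ = 1 := by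
  rw [ee_eq, mul_comm]; exact Complex.norm_exp_ofReal_mul_I _

lemma ee_int (n : ℤ) : ee n = 1 := by
  unfold ee
  rw [Complex.exp_eq_one_iff]
  exact ⟨n, by push_cast; ring⟩

lemma ee_conj (x : ℝ) : (starRingEnd ℂ) (ee x) = ee (-x) := by
  unfold ee
  rw [← Complex.exp_conj]
  congr 1
  have h2 : (starRingEnd ℂ) 2 = 2 := map_ofNat _ 2
  simp [h2]

lemma ee_add_int (x : ℝ) (n : ℤ) : ee (x + n) = ee x := by
  rw [ee_add, ee_int, mul_one]

lemma ee_nat_mul (n : ℕ) (x : ℝ) : ee (n * x) = ee x ^ n := by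
  unfold ee; rw [← Complex.exp_nat_mul]; congr 1; push_cast; ring

lemma ee_ne_zero (x : ℝ) : ee x ≠ 0 := Complex.exp_ne_zero _

lemma dn_nonneg (x : ℝ) : 0 ≤ dn x := abs_nonneg _

lemma four_dn_le (x : ℝ) : 4 * dn x ≤ ‖ee x - 1‖ := by
  have h1 : ee x = ee (x - round x) := by
    have := ee_add_int (x - round x) (round x)
    rw [← this]; congr 1; ring
  rw [h1]
  have h2 := abs_sub_round x
  unfold dn
  set t := x - round x
  rw [ee_eq, Complex.norm_exp_I_mul_ofReal_sub_one]
  have h3 : |Real.pi * t| ≤ Real.pi / 2 := by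
    rw [abs_mul, abs_of_pos Real.pi_pos]; nlinarith [Real.pi_pos]
  have h4 := Real.mul_abs_le_abs_sin h3
  rw [abs_mul, abs_of_pos Real.pi_pos] at h4
  have h5 : 2 / Real.pi * (Real.pi * |t|) = 2 * |t| := by
    field_simp
  rw [h5] at h4
  have h6 : 2 * Real.pi * t / 2 = Real.pi * t := by ring
  rw [h6, norm_mul, Real.norm_eq_abs, Real.norm_eq_abs]
  norm_num
  linarith

lemma geom_bound (β : ℝ) (A B : ℕ) :
    ‖∑ m ∈ Ioc A B, ee (β * m)‖ * dn β ≤ 1 / 2 := by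
  rcases le_total B A with h | h
  · rw [Ioc_eq_empty_of_le h]; simp
  have key : (∑ m ∈ Ioc A B, ee (β * m)) * (ee β - 1) = ee (β * (B + 1)) - ee (β * (A + 1)) := by
    induction B, h using Nat.le_induction with
    | base => simp
    | succ n hn ih =>
      rw [Finset.sum_Ioc_succ_top (by omega), add_mul, ih]
      have : ee (β * ((n + 1 : ℕ) : ℝ)) * ee β = ee (β * (((n + 1 : ℕ) : ℝ) + 1)) := by
        rw [← ee_add]; congr 1; ring
      rw [mul_sub, this]
      push_cast
      ring
  have h1 : ‖(∑ m ∈ Ioc A B, ee (β * m))‖ * ‖ee β - 1‖ ≤ 2 := by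
    rw [← norm_mul, key]
    calc _ ≤ ‖ee (β * (B + 1))‖ + ‖ee (β * (A + 1))‖ := norm_sub_le _ _
      _ = 2 := by rw [norm_ee, norm_ee]; norm_num
  have h2 := mul_le_mul_of_nonneg_left (four_dn_le β) (norm_nonneg (∑ m ∈ Ioc A B, ee (β * m)))
  linarith

lemma abel_bound (f : ℕ → ℂ) (w : ℕ → ℝ) (G : ℝ) (A B : ℕ) (hAB : A ≤ B)
    (hG : ∀ j, A ≤ j → j ≤ B → ‖∑ m ∈ Ioc A j, f m‖ ≤ G) :
    ‖∑ m ∈ Ioc A B, (w m : ℂ) * f m‖ ≤ G * (|w B| + ∑ m ∈ Ico A B, |w (m + 1) - w m|) := by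
  have key : ∑ m ∈ Ioc A B, (w m : ℂ) * f m = w B * (∑ m ∈ Ioc A B, f m)
      - ∑ m ∈ Ico A B, ((w (m + 1) - w m : ℝ) : ℂ) * (∑ i ∈ Ioc A m, f i) := by
    clear hG
    induction B, hAB using Nat.le_induction with
    | base => simp
    | succ n hn ih =>
      rw [Finset.sum_Ioc_succ_top (by omega), ih, Finset.sum_Ioc_succ_top (by omega),
        Finset.sum_Ico_succ_top (by omega)]
      push_cast
      ring
  rw [key]
  refine (norm_sub_le _ _).trans ?_
  rw [mul_add, Finset.mul_sum (Ico A B) (fun m => |w (m + 1) - w m|) G]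
  refine add_le_add ?_ ?_
  · rw [norm_mul, Complex.norm_real, Real.norm_eq_abs, mul_comm]
    exact mul_le_mul_of_nonneg_right (hG B hAB le_rfl) (abs_nonneg _)
  · refine (norm_sum_le _ _).trans (Finset.sum_le_sum fun m hm => ?_)
    rw [mem_Ico] at hm
    rw [norm_mul, Complex.norm_real, Real.norm_eq_abs, mul_comm]
    exact mul_le_mul_of_nonneg_right (hG m hm.1 hm.2.le) (abs_nonneg _)

lemma abel_mono (f : ℕ → ℂ) (w : ℕ → ℝ) (hw : Monotone w) (hw0 : ∀ n, 0 ≤ w n) (G : ℝ)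
    (A B : ℕ) (hAB : A ≤ B)
    (hG : ∀ j, A ≤ j → j ≤ B → ‖∑ m ∈ Ioc A j, f m‖ ≤ G) :
    ‖∑ m ∈ Ioc A B, (w m : ℂ) * f m‖ ≤ G * (2 * w B) := by
  refine (abel_bound f w G A B hAB hG).trans ?_
  have hG0 : 0 ≤ G := (norm_nonneg _).trans (hG A le_rfl hAB)
  refine mul_le_mul_of_nonneg_left ?_ hG0
  have : ∑ m ∈ Ico A B, |w (m + 1) - w m| = w B - w A := by
    rw [← Finset.sum_Ico_sub w hAB]
    exact Finset.sum_congr rfl fun m _ => abs_of_nonneg (sub_nonneg.2 (hw (Nat.le_succ m)))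
  rw [this, abs_of_nonneg (hw0 B)]
  linarith [hw0 A]

lemma abel_anti (f : ℕ → ℂ) (w : ℕ → ℝ) (hw : Antitone w) (hw0 : ∀ n, 0 ≤ w n) (G : ℝ)
    (A B : ℕ) (hAB : A ≤ B)
    (hG : ∀ j, A ≤ j → j ≤ B → ‖∑ m ∈ Ioc A j, f m‖ ≤ G) :
    ‖∑ m ∈ Ioc A B, (w m : ℂ) * f m‖ ≤ G * w A := by
  refine (abel_bound f w G A B hAB hG).trans ?_
  have hG0 : 0 ≤ G := (norm_nonneg _).trans (hG A le_rfl hAB)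
  refine mul_le_mul_of_nonneg_left ?_ hG0
  have : ∑ m ∈ Ico A B, |w (m + 1) - w m| = - (w B - w A) := by
    rw [← Finset.sum_Ico_sub w hAB, ← Finset.sum_neg_distrib]
    exact Finset.sum_congr rfl fun m _ => abs_of_nonpos (sub_nonpos.2 (hw (Nat.le_succ m)))
  rw [this, abs_of_nonneg (hw0 B)]
  linarith [hw0 A]

lemma harm_le (n : ℕ) : ∑ i ∈ range n, 1 / ((i : ℝ) + 1) ≤ 1 + Real.log n := by
  have := harmonic_le_one_add_log n
  unfold harmonic at this
  push_cast at this
  simpa [one_div] using this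

lemma dn_le (x : ℝ) (z : ℤ) : dn x ≤ |x - z| := round_le x z

lemma near_lower {α : ℝ} {a : ℤ} {q : ℕ} (hq : 0 < q) (hc : IsCoprime a (q : ℤ))
    (hα : |α - a / q| ≤ 1 / (q : ℝ) ^ 2) (d z : ℤ) (hd : d ≠ 0) (hd2 : 2 * |d| ≤ q) :
    1 / (2 * (q : ℝ)) ≤ |α * d - z| := by
  have hq' : (0 : ℝ) < q := by exact_mod_cast hq
  have h1 : a * d - z * q ≠ 0 := by
    intro h
    have h2 : (q : ℤ) ∣ a * d := ⟨z, by linarith⟩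
    have h3 : (q : ℤ) ∣ d := hc.symm.dvd_of_dvd_mul_left h2
    have h4 := Int.le_of_dvd (abs_pos.2 hd) ((dvd_abs _ _).2 h3)
    have := abs_pos.2 hd
    omega
  have h2 : (1 : ℝ) ≤ |(a : ℝ) * d - z * q| := by
    have := Int.one_le_abs h1
    exact_mod_cast this
  have h3 : 1 / (q : ℝ) ≤ |(a : ℝ) / q * d - z| := by
    have : (a : ℝ) / q * d - z = ((a : ℝ) * d - z * q) / q := by field_simp
    rw [this, abs_div, abs_of_pos hq']
    gcongr
  have h4 : |(α - a / q) * d| ≤ 1 / (2 * (q : ℝ)) := by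
    rw [abs_mul]
    have h5 : 2 * |(d : ℝ)| ≤ q := by exact_mod_cast hd2
    calc _ ≤ 1 / (q : ℝ) ^ 2 * |(d : ℝ)| := by gcongr
      _ ≤ 1 / (q : ℝ) ^ 2 * (q / 2) := by gcongr; linarith
      _ = _ := by field_simp
  have h5 : (a : ℝ) / q * d - z = (α * d - z) - (α - a / q) * d := by ring
  rw [h5] at h3
  have h6 := abs_sub (α * d - z) ((α - a / q) * d)
  have h7 : 1 / (q : ℝ) = 1 / (2 * q) + 1 / (2 * q) := by field_simp; norm_num
  linarith

lemma half_block {α : ℝ} {a : ℤ} {q : ℕ} (hq : 0 < q) (hc : IsCoprime a (q : ℤ))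
    (hα : |α - a / q| ≤ 1 / (q : ℝ) ^ 2) (P : Finset ℕ)
    (hP : ∀ h ∈ P, ∀ h' ∈ P, 2 * |(h : ℤ) - h'| ≤ q)
    (ε : ℝ) (hε : |ε| = 1)
    (hs : ∀ h ∈ P, |α * h - round (α * h)| = ε * (α * h - round (α * h)))
    (F : ℕ → ℝ) (X : ℝ) (hX : 0 ≤ X) (hFX : ∀ h, F h ≤ X)
    (hFd : ∀ h, F h * dn (α * h) ≤ 1) :
    ∑ h ∈ P, F h ≤ X + 2 * q * (1 + Real.log q) := by
  have hq' : (0 : ℝ) < q := by exact_mod_cast hq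
  set Φ : ℕ → ℝ := fun j => if j = 0 then X else 2 * q / j with hΦ
  set J : ℕ → ℕ := fun h => ⌊2 * q * dn (α * h)⌋₊ with hJ
  have hn : ∀ h : ℕ, 0 ≤ 2 * q * dn (α * h) := fun h => by have := dn_nonneg (α * h); positivity
  have h1 : ∀ h ∈ P, F h ≤ Φ (J h) := by
    intro h _
    simp only [hΦ]
    split_ifs with h0
    · exact hFX h
    · have hJ1 : (J h : ℝ) ≤ 2 * q * dn (α * h) := Nat.floor_le (hn h)
      have hJ0 : (0 : ℝ) < J h := by exact_mod_cast Nat.pos_of_ne_zero h0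
      rw [le_div_iff₀ hJ0]
      rcases le_total (F h) 0 with hF | hF
      · have : F h * J h ≤ 0 := mul_nonpos_of_nonpos_of_nonneg hF hJ0.le
        linarith
      · calc F h * J h ≤ F h * (2 * q * dn (α * h)) := by gcongr
          _ = 2 * q * (F h * dn (α * h)) := by ring
          _ ≤ 2 * q * 1 := by gcongr; exact hFd h
          _ = _ := by ring
  have hinj : Set.InjOn J P := by
    intro h hh h' hh' he
    by_contra hne
    have e1 : (J h : ℝ) ≤ 2 * q * dn (α * h) := Nat.floor_le (hn h)
    have e2 : 2 * q * dn (α * h) < J h + 1 := Nat.lt_floor_add_one _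
    have e3 : (J h' : ℝ) ≤ 2 * q * dn (α * h') := Nat.floor_le (hn h')
    have e4 : 2 * q * dn (α * h') < J h' + 1 := Nat.lt_floor_add_one _
    rw [he] at e1 e2
    have e5 : |2 * q * (dn (α * h) - dn (α * h'))| < 1 := by
      rw [abs_lt]; constructor <;> linarith
    unfold dn at e5
    rw [hs h hh, hs h' hh'] at e5
    have e6 : 2 * (q : ℝ) * (ε * (α * h - round (α * h)) - ε * (α * h' - round (α * h')))
        = ε * (2 * q * (α * (((h : ℤ) - h' : ℤ) : ℝ)
          - ((round (α * h) - round (α * h') : ℤ) : ℝ))) := by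
      push_cast; ring
    rw [e6, abs_mul, hε, one_mul, abs_mul, abs_of_pos (by positivity)] at e5
    have e7 := near_lower hq hc hα ((h : ℤ) - h') (round (α * h) - round (α * h'))
      (by intro h0; apply hne; omega) (hP h hh h' hh')
    have e8 : 2 * (q : ℝ) * (1 / (2 * q)) = 1 := by field_simp
    have := mul_le_mul_of_nonneg_left e7 (by positivity : 0 ≤ 2 * (q : ℝ))
    linarith
  have hΦ0 : ∀ j, 0 ≤ Φ j := by
    intro j; simp only [hΦ]; split_ifs
    · exact hX
    · positivity
  have hsub : P.image J ⊆ range (q + 1) := by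
    intro j hj
    obtain ⟨h, _, rfl⟩ := mem_image.1 hj
    rw [mem_range, Nat.lt_succ_iff]
    apply Nat.floor_le_of_le
    have : dn (α * h) ≤ 1 / 2 := abs_sub_round _
    nlinarith
  calc ∑ h ∈ P, F h ≤ ∑ h ∈ P, Φ (J h) := sum_le_sum h1
    _ = ∑ j ∈ P.image J, Φ j := (sum_image hinj).symm
    _ ≤ ∑ j ∈ range (q + 1), Φ j := sum_le_sum_of_subset_of_nonneg hsub fun j _ _ => hΦ0 j
    _ = 2 * q * (∑ j ∈ range q, 1 / ((j : ℝ) + 1)) + X := by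
        rw [sum_range_succ', mul_sum]
        simp only [hΦ]
        congr 1
        apply sum_congr rfl
        intro j _
        rw [if_neg (by omega)]
        push_cast; ring
    _ ≤ _ := by
        have := mul_le_mul_of_nonneg_left (harm_le q) (by positivity : 0 ≤ 2 * (q : ℝ))
        linarith

lemma block {α : ℝ} {a : ℤ} {q : ℕ} (hq : 0 < q) (hc : IsCoprime a (q : ℤ))
    (hα : |α - a / q| ≤ 1 / (q : ℝ) ^ 2) (k r : ℕ) (hr : 2 * r ≤ q + 2)
    (F : ℕ → ℝ) (X : ℝ) (hX : 0 ≤ X) (hFX : ∀ h, F h ≤ X)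
    (hFd : ∀ h, F h * dn (α * h) ≤ 1) :
    ∑ h ∈ Ico k (k + r), F h ≤ 2 * X + 4 * q * (1 + Real.log q) := by
  rw [← sum_filter_add_sum_filter_not (Ico k (k + r)) (fun h : ℕ => 0 ≤ α * h - round (α * h))]
  have hd : ∀ h ∈ Ico k (k + r), ∀ h' ∈ Ico k (k + r), 2 * |(h : ℤ) - h'| ≤ q := by
    intro h hh h' hh'
    rw [mem_Ico] at hh hh'
    have : |(h : ℤ) - h'| ≤ r - 1 := by rw [abs_le]; omega
    omega
  have A1 := half_block hq hc hα ((Ico k (k + r)).filter (fun h : ℕ => 0 ≤ α * h - round (α * h)))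
    (fun h hh h' hh' => hd h (mem_filter.1 hh).1 h' (mem_filter.1 hh').1) 1 (by simp)
    (fun h hh => by rw [one_mul, abs_of_nonneg (mem_filter.1 hh).2]) F X hX hFX hFd
  have A2 := half_block hq hc hα ((Ico k (k + r)).filter (fun h : ℕ => ¬ 0 ≤ α * h - round (α * h)))
    (fun h hh h' hh' => hd h (mem_filter.1 hh).1 h' (mem_filter.1 hh').1) (-1) (by simp)
    (fun h hh => by rw [neg_one_mul, abs_of_neg (not_le.1 (mem_filter.1 hh).2)]) F X hX hFX hFd
  linarith

lemma unif_block {α : ℝ} {a : ℤ} {q : ℕ} (hq : 0 < q) (hc : IsCoprime a (q : ℤ))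
    (hα : |α - a / q| ≤ 1 / (q : ℝ) ^ 2) (n : ℕ)
    (F : ℕ → ℝ) (X : ℝ) (hF0 : ∀ h, 0 ≤ F h) (hFX : ∀ h, F h ≤ X)
    (hFd : ∀ h, F h * dn (α * h) ≤ 1) :
    ∑ h ∈ range n, F h ≤ (2 * n / q + 1) * (2 * X + 4 * q * (1 + Real.log q)) := by
  have hq' : (0 : ℝ) < q := by exact_mod_cast hq
  have hX : 0 ≤ X := (hF0 0).trans (hFX 0)
  have hlog : 0 ≤ Real.log q := Real.log_natCast_nonneg q
  set r := q / 2 + 1 with hr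
  have h1 : ∀ K : ℕ, ∑ h ∈ range (r * K), F h ≤ K * (2 * X + 4 * q * (1 + Real.log q)) := by
    intro K
    induction K with
    | zero => simp
    | succ K ih =>
      have := block hq hc hα (r * K) r (by omega) F X hX hFX hFd
      rw [mul_add, mul_one, ← sum_range_add_sum_Ico _ (Nat.le_add_right (r * K) r)]
      push_cast
      linarith
  have h2 : n ≤ r * (n / r + 1) := by
    have := Nat.lt_mul_div_succ n (show 0 < r by omega)
    omega
  have h3 : ((n / r : ℕ) : ℝ) ≤ 2 * n / q := by
    refine Nat.cast_div_le.trans ?_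
    have : (q : ℝ) ≤ 2 * r := by
      have : q ≤ 2 * r := by omega
      exact_mod_cast this
    have hr0 : (0 : ℝ) < r := by positivity
    rw [div_le_div_iff₀ hr0 hq']
    nlinarith [Nat.cast_nonneg (α := ℝ) n]
  calc ∑ h ∈ range n, F h ≤ ∑ h ∈ range (r * (n / r + 1)), F h :=
        sum_le_sum_of_subset_of_nonneg (range_subset_range.2 h2) fun j _ _ => hF0 j
    _ ≤ ((n / r + 1 : ℕ) : ℝ) * (2 * X + 4 * q * (1 + Real.log q)) := h1 _
    _ ≤ _ := by
      push_cast
      gcongr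

lemma weighted_inner (β : ℝ) (U B : ℕ) :
    ‖∑ m ∈ Ioc U B, ((m : ℝ) : ℂ) * ee (β * m)‖ * dn β ≤ B := by
  rcases le_total B U with h | h
  · rw [Ioc_eq_empty_of_le h]; simp
  rcases (dn_nonneg β).eq_or_lt with h0 | h0
  · rw [← h0]; simp
  have := abel_mono (fun m => ee (β * m)) (fun m => (m : ℝ)) Nat.mono_cast
    (fun n => Nat.cast_nonneg n) (1 / (2 * dn β)) U B h (fun j _ _ => by
      have := geom_bound β U j
      rw [le_div_iff₀ (by positivity)]
      linarith)
  have h2 : 1 / (2 * dn β) * (2 * (B : ℝ)) = B / dn β := by field_simp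
  rw [h2, le_div_iff₀ h0] at this
  exact this

lemma weighted_triv (β : ℝ) (U B : ℕ) :
    ‖∑ m ∈ Ioc U B, ((m : ℝ) : ℂ) * ee (β * m)‖ ≤ (B : ℝ) * B := by
  calc _ ≤ ∑ m ∈ Ioc U B, (B : ℝ) := by
        refine norm_sum_le_of_le _ fun m hm => ?_
        rw [norm_mul, norm_ee, mul_one, Complex.norm_real, Real.norm_natCast]
        exact_mod_cast (mem_Ioc.1 hm).2
    _ ≤ _ := by
        rw [sum_const, Nat.card_Ioc, nsmul_eq_mul]
        gcongr
        omega

lemma weighted_sum {α : ℝ} {a : ℤ} {q : ℕ} (hq : 0 < q) (hc : IsCoprime a (q : ℤ))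
    (hα : |α - a / q| ≤ 1 / (q : ℝ) ^ 2) (U x n : ℕ) (hn : 0 < n) :
    ∑ h ∈ range n, ‖∑ m ∈ Ioc U (x / n), ((m : ℝ) : ℂ) * ee (α * h * m)‖ ≤
      (x : ℝ) / n * ((2 * n / q + 1) * (2 * ((x : ℝ) / n) + 4 * q * (1 + Real.log q))) := by
  have hq' : (0 : ℝ) < q := by exact_mod_cast hq
  have hn' : (0 : ℝ) < n := by exact_mod_cast hn
  have hlog : 0 ≤ Real.log q := Real.log_natCast_nonneg q
  rcases Nat.eq_zero_or_pos x with h | h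
  · subst h; simp
  have hx' : (0 : ℝ) < x := by exact_mod_cast h
  have hX : (0 : ℝ) < (x : ℝ) / n := by positivity
  have hB : ((x / n : ℕ) : ℝ) ≤ (x : ℝ) / n := Nat.cast_div_le
  have := unif_block hq hc hα n
    (fun h => ‖∑ m ∈ Ioc U (x / n), ((m : ℝ) : ℂ) * ee (α * h * m)‖ / ((x : ℝ) / n)) ((x : ℝ) / n)
    (fun h => by positivity)
    (fun h => by
      rw [div_le_iff₀ hX]
      refine (weighted_triv _ _ _).trans ?_
      gcongr)
    (fun h => by
      rw [div_mul_eq_mul_div, div_le_one hX]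
      exact (weighted_inner _ _ _).trans hB)
  rw [← sum_div, div_le_iff₀ hX] at this
  linarith

lemma sum_inv_Ioc (A B : ℕ) : ∑ n ∈ Ioc A B, 1 / (n : ℝ) ≤ 1 + Real.log B := by
  calc _ ≤ ∑ n ∈ Ioc 0 B, 1 / (n : ℝ) := by
        refine sum_le_sum_of_subset_of_nonneg (fun n hn => ?_) fun n _ _ => by positivity
        rw [mem_Ioc] at *; omega
    _ = ∑ i ∈ range B, 1 / ((i : ℝ) + 1) := by
        rw [range_eq_Ico, ← Finset.Ico_add_one_add_one_eq_Ioc, ← Finset.sum_Ico_add' (fun n : ℕ => 1 / (n : ℝ)) 0 B 1]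
        simp
    _ ≤ _ := harm_le B

lemma tri_sum {α : ℝ} {a : ℤ} {q : ℕ} (hq : 0 < q) (hc : IsCoprime a (q : ℤ))
    (hα : |α - a / q| ≤ 1 / (q : ℝ) ^ 2) (U x : ℕ) (hU : 0 < U) (hUq : U ≤ q) (ℓ : ℝ)
    (hℓx : 1 + Real.log x ≤ ℓ) (hℓq : 1 + Real.log q ≤ ℓ) :
    ∑ n ∈ Ioc U x, ∑ h ∈ range n, ‖∑ m ∈ Ioc U (x / n), ((m : ℝ) : ℂ) * ee (α * h * m)‖ ≤
      ℓ ^ 2 * (14 * x ^ 2 / U + 4 * q * x) := by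
  have hq' : (0 : ℝ) < q := by exact_mod_cast hq
  have hU' : (0 : ℝ) < U := by exact_mod_cast hU
  have hUq' : (U : ℝ) ≤ q := by exact_mod_cast hUq
  have hlog : 0 ≤ Real.log q := Real.log_natCast_nonneg q
  have hlogx : 0 ≤ Real.log x := Real.log_natCast_nonneg x
  have hℓ1 : 1 ≤ ℓ := by linarith
  have hsub : Ioc U (x / U) ⊆ Ioc U x := by
    intro n hn
    rw [mem_Ioc] at *
    exact ⟨hn.1, hn.2.trans (Nat.div_le_self _ _)⟩
  rw [← sum_subset hsub]
  · have hterm : ∀ n ∈ Ioc U (x / U),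
        ∑ h ∈ range n, ‖∑ m ∈ Ioc U (x / n), ((m : ℝ) : ℂ) * ee (α * h * m)‖ ≤
        ℓ * (6 * x ^ 2 / U + 4 * q * x) * (1 / n) + 8 * x * ℓ := by
      intro n hn
      rw [mem_Ioc] at hn
      have hn0 : 0 < n := by omega
      have hn' : (0 : ℝ) < n := by exact_mod_cast hn0
      have hUn : (U : ℝ) ≤ n := by exact_mod_cast hn.1.le
      refine (weighted_sum hq hc hα U x n hn0).trans ?_
      have e1 : (x : ℝ) / n * ((2 * n / q + 1) * (2 * ((x : ℝ) / n) + 4 * q * (1 + Real.log q)))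
          = (4 * (x ^ 2 / q) + 2 * (x ^ 2 / n) + 4 * q * x * (1 + Real.log q)) * (1 / n)
            + 8 * x * (1 + Real.log q) := by
        field_simp
        ring
      rw [e1]
      have e2 : (x : ℝ) ^ 2 / q ≤ x ^ 2 / U := by gcongr
      have e3 : (x : ℝ) ^ 2 / n ≤ x ^ 2 / U := by gcongr
      have e4 : 4 * (q : ℝ) * x * (1 + Real.log q) ≤ 4 * q * x * ℓ := by gcongr
      have e5 : 0 ≤ (x : ℝ) ^ 2 / U := by positivity
      have e6 : 6 * ((x : ℝ) ^ 2 / U) ≤ ℓ * (6 * ((x : ℝ) ^ 2 / U)) := by nlinarith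
      have e7 : 4 * (x ^ 2 / q) + 2 * (x ^ 2 / n) + 4 * q * x * (1 + Real.log q)
          ≤ ℓ * (6 * x ^ 2 / U + 4 * q * x) := by
        have : ℓ * (6 * x ^ 2 / U + 4 * q * x) = ℓ * (6 * ((x : ℝ) ^ 2 / U)) + 4 * q * x * ℓ := by
          ring
        rw [this]; linarith
      gcongr
    refine (sum_le_sum hterm).trans ?_
    rw [sum_add_distrib, ← mul_sum, sum_const, Nat.card_Ioc, nsmul_eq_mul]
    have f1 : ∑ n ∈ Ioc U (x / U), 1 / (n : ℝ) ≤ ℓ := by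
      refine le_trans (sum_le_sum_of_subset_of_nonneg hsub fun n _ _ => by positivity) ?_
      exact (sum_inv_Ioc U x).trans hℓx
    have f2 : ((x / U - U : ℕ) : ℝ) ≤ x / U := by
      refine le_trans ?_ (Nat.cast_div_le (α := ℝ))
      exact_mod_cast Nat.sub_le _ _
    calc _ ≤ ℓ * (6 * x ^ 2 / U + 4 * q * x) * ℓ + x / U * (8 * x * ℓ) := by gcongr
      _ ≤ ℓ * (6 * x ^ 2 / U + 4 * q * x) * ℓ + x / U * (8 * x * ℓ) * ℓ := by
          have := le_mul_of_one_le_right (by positivity : 0 ≤ (x : ℝ) / U * (8 * x * ℓ)) hℓ1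
          linarith
      _ = _ := by ring
  · intro n hn hn2
    rw [mem_Ioc] at hn hn2
    have h1 : x / U < n := by
      by_contra h
      exact hn2 ⟨hn.1, by omega⟩
    have h2 : x / n ≤ U := by
      have := (Nat.div_lt_iff_lt_mul hU).1 h1
      have h3 : x / n < U := (Nat.div_lt_iff_lt_mul (by omega)).2 (by rwa [mul_comm])
      exact h3.le
    apply sum_eq_zero
    intro h _
    rw [Ioc_eq_empty_of_le h2]; simp

lemma bilin {α : ℝ} {a : ℤ} {q : ℕ} (hq : 0 < q) (hc : IsCoprime a (q : ℤ))
    (hα : |α - a / q| ≤ 1 / (q : ℝ) ^ 2) (U x : ℕ) (hU : 0 < U) (hUq : U ≤ q) (ℓ : ℝ)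
    (hℓx : 1 + Real.log x ≤ ℓ) (hℓq : 1 + Real.log q ≤ ℓ) (c y : ℕ → ℝ) (Y : ℝ)
    (hc1 : ∀ m, |c m| ≤ 1) (hy : ∀ n ∈ Ioc U x, |y n| ≤ Y) :
    ‖∑ m ∈ Ioc U x, ∑ n ∈ Ioc U (x / m), (c m : ℂ) * (y n : ℂ) * ee (α * (m * n))‖ ^ 2 ≤
      ℓ ^ 3 * Y ^ 2 * (28 * x ^ 2 / U + 8 * q * x) := by
  set R := Ioc U x with hR
  set g : ℕ → ℕ → ℂ := fun m n => if m * n ≤ x then (y n : ℂ) * ee (α * (m * n)) else 0 with hg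
  set E : ℕ → ℕ → ℝ := fun n h => ‖∑ m ∈ Ioc U (x / n), ((m : ℝ) : ℂ) * ee (α * h * m)‖ with hE
  have hRpos : ∀ m ∈ R, 0 < m := fun m hm => by have := (mem_Ioc.1 hm).1; omega
  have hIoc : ∀ m, 0 < m → Ioc U (x / m) = R.filter (fun n => m * n ≤ x) := by
    intro m hm
    ext n
    rw [mem_filter, hR, mem_Ioc, mem_Ioc, Nat.le_div_iff_mul_le hm, mul_comm m n]
    constructor
    · rintro ⟨h1, h2⟩
      exact ⟨⟨h1, (Nat.le_mul_of_pos_right n hm).trans h2⟩, h2⟩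
    · rintro ⟨⟨h1, _⟩, h2⟩
      exact ⟨h1, h2⟩
  have h1 : ∑ m ∈ R, ∑ n ∈ Ioc U (x / m), (c m : ℂ) * (y n : ℂ) * ee (α * (m * n))
      = ∑ m ∈ R, (c m : ℂ) * ∑ n ∈ R, g m n := by
    apply sum_congr rfl
    intro m hm
    rw [hIoc m (hRpos m hm), sum_filter, mul_sum]
    apply sum_congr rfl
    intro n _
    simp only [hg]
    split_ifs
    · ring
    · simp
  have h2 : ‖∑ m ∈ R, (c m : ℂ) * ∑ n ∈ R, g m n‖ ≤ ∑ m ∈ R, ‖∑ n ∈ R, g m n‖ := by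
    refine norm_sum_le_of_le _ fun m _ => ?_
    rw [norm_mul, Complex.norm_real, Real.norm_eq_abs]
    exact mul_le_of_le_one_left (norm_nonneg _) (hc1 m)
  have h3 : (∑ m ∈ R, ‖∑ n ∈ R, g m n‖) ^ 2 ≤
      (∑ m ∈ R, 1 / (m : ℝ)) * ∑ m ∈ R, (m : ℝ) * ‖∑ n ∈ R, g m n‖ ^ 2 := by
    have := sum_mul_sq_le_sq_mul_sq R (fun m => √(1 / (m : ℝ))) (fun m => √(m : ℝ) * ‖∑ n ∈ R, g m n‖)
    have e1 : ∑ m ∈ R, √(1 / (m : ℝ)) * (√(m : ℝ) * ‖∑ n ∈ R, g m n‖) = ∑ m ∈ R, ‖∑ n ∈ R, g m n‖ := by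
      apply sum_congr rfl
      intro m hm
      have : (0 : ℝ) < m := by exact_mod_cast hRpos m hm
      rw [← mul_assoc, ← Real.sqrt_mul (by positivity), one_div_mul_cancel this.ne', Real.sqrt_one,
        one_mul]
    have e2 : ∑ m ∈ R, √(1 / (m : ℝ)) ^ 2 = ∑ m ∈ R, 1 / (m : ℝ) :=
      sum_congr rfl fun m _ => Real.sq_sqrt (by positivity)
    have e3 : ∑ m ∈ R, (√(m : ℝ) * ‖∑ n ∈ R, g m n‖) ^ 2 = ∑ m ∈ R, (m : ℝ) * ‖∑ n ∈ R, g m n‖ ^ 2 :=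
      sum_congr rfl fun m _ => by rw [mul_pow, Real.sq_sqrt (by positivity)]
    rw [e1, e2, e3] at this
    exact this
  have h4 : ((∑ m ∈ R, (m : ℝ) * ‖∑ n ∈ R, g m n‖ ^ 2 : ℝ) : ℂ) =
      ∑ n ∈ R, ∑ n' ∈ R, ∑ m ∈ R, ((m : ℝ) : ℂ) * (g m n * (starRingEnd ℂ) (g m n')) := by
    have : ∑ n ∈ R, ∑ n' ∈ R, ∑ m ∈ R, ((m : ℝ) : ℂ) * (g m n * (starRingEnd ℂ) (g m n'))
        = ∑ m ∈ R, ∑ n ∈ R, ∑ n' ∈ R, ((m : ℝ) : ℂ) * (g m n * (starRingEnd ℂ) (g m n')) := by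
      rw [sum_congr rfl fun n _ => sum_comm]
      rw [sum_comm]
    rw [this]
    push_cast
    apply sum_congr rfl
    intro m _
    rw [← Complex.mul_conj', map_sum, sum_mul_sum, mul_sum]
    apply sum_congr rfl
    intro n _
    rw [mul_sum]
  have hmain : ∀ n ∈ R, ∀ n' ∈ R, n' ≤ n →
      ‖∑ m ∈ R, ((m : ℝ) : ℂ) * (g m n * (starRingEnd ℂ) (g m n'))‖ ≤ Y ^ 2 * E n (n - n') := by
    intro n hn n' hn' hle
    have : ∑ m ∈ R, ((m : ℝ) : ℂ) * (g m n * (starRingEnd ℂ) (g m n'))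
        = ((y n * y n' : ℝ) : ℂ) * ∑ m ∈ Ioc U (x / n), ((m : ℝ) : ℂ) * ee (α * (n - n' : ℕ) * m) := by
      rw [hIoc n (hRpos n hn), sum_filter, mul_sum]
      apply sum_congr rfl
      intro m hm
      simp only [hg]
      by_cases hmn : m * n ≤ x
      · have hmn' : m * n' ≤ x := (Nat.mul_le_mul_left m hle).trans hmn
        rw [if_pos hmn, if_pos hmn', if_pos (by rwa [mul_comm]), map_mul, Complex.conj_ofReal, ee_conj]
        have : ee (α * (n - n' : ℕ) * m) = ee (α * (m * n)) * ee (-(α * (m * n'))) := by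
          rw [← ee_add]; congr 1; push_cast [hle]; ring
        rw [this]
        push_cast
        ring
      · have hnm : ¬ n * m ≤ x := by rwa [mul_comm]
        rw [if_neg hmn, if_neg hnm]
        simp
    rw [this, norm_mul, Complex.norm_real, Real.norm_eq_abs, abs_mul]
    have hYn := hy n hn
    have hYn' := hy n' hn'
    have : |y n| * |y n'| ≤ Y ^ 2 := by
      rw [sq]
      exact mul_le_mul hYn hYn' (abs_nonneg _) ((abs_nonneg _).trans hYn)
    exact mul_le_mul_of_nonneg_right this (norm_nonneg _)
  have hE0 : ∀ n h, 0 ≤ E n h := fun n h => norm_nonneg _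
  have hD : ∀ n ∈ R, ∀ n' ∈ R,
      ‖∑ m ∈ R, ((m : ℝ) : ℂ) * (g m n * (starRingEnd ℂ) (g m n'))‖ ≤
        Y ^ 2 * ((if n' ≤ n then E n (n - n') else 0) + (if n ≤ n' then E n' (n' - n) else 0)) := by
    intro n hn n' hn'
    rcases le_total n' n with h | h
    · refine (hmain n hn n' hn' h).trans ?_
      rw [if_pos h]
      have : 0 ≤ (if n ≤ n' then E n' (n' - n) else 0) := by split_ifs; exacts [hE0 _ _, le_rfl]
      gcongr
      linarith
    · have e : ‖∑ m ∈ R, ((m : ℝ) : ℂ) * (g m n * (starRingEnd ℂ) (g m n'))‖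
          = ‖∑ m ∈ R, ((m : ℝ) : ℂ) * (g m n' * (starRingEnd ℂ) (g m n))‖ := by
        rw [← Complex.norm_conj, map_sum]
        congr 1
        apply sum_congr rfl
        intro m _
        rw [map_mul, map_mul, Complex.conj_ofReal, Complex.conj_conj]
        ring
      rw [e]
      refine (hmain n' hn' n hn h).trans ?_
      rw [if_pos h]
      have : 0 ≤ (if n' ≤ n then E n (n - n') else 0) := by split_ifs; exacts [hE0 _ _, le_rfl]
      gcongr
      linarith
  have hin : ∀ n ∈ R, ∑ n' ∈ R, (if n' ≤ n then E n (n - n') else 0) ≤ ∑ h ∈ range n, E n h := by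
    intro n hn
    rw [← sum_filter]
    have hinj : Set.InjOn (fun n' => n - n') (R.filter (fun n' => n' ≤ n) : Set ℕ) := by
      intro i hi j hj hij
      have hi2 := (mem_filter.1 (mem_coe.1 hi)).2
      have hj2 := (mem_filter.1 (mem_coe.1 hj)).2
      simp only at hij
      omega
    rw [← sum_image (f := fun h => E n h) hinj]
    refine sum_le_sum_of_subset_of_nonneg (fun h hh => ?_) fun h _ _ => hE0 _ _
    obtain ⟨n', hn', rfl⟩ := mem_image.1 hh
    have := hRpos n' (mem_filter.1 hn').1
    have := hRpos n hn
    rw [mem_range]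
    omega
  have htri := tri_sum hq hc hα U x hU hUq ℓ hℓx hℓq
  have h5 : ∑ m ∈ R, (m : ℝ) * ‖∑ n ∈ R, g m n‖ ^ 2 ≤
      Y ^ 2 * (2 * (ℓ ^ 2 * (14 * x ^ 2 / U + 4 * q * x))) := by
    have e1 : ∑ m ∈ R, (m : ℝ) * ‖∑ n ∈ R, g m n‖ ^ 2 =
        ‖((∑ m ∈ R, (m : ℝ) * ‖∑ n ∈ R, g m n‖ ^ 2 : ℝ) : ℂ)‖ := by
      rw [Complex.norm_real, Real.norm_of_nonneg (sum_nonneg fun m _ => by positivity)]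
    rw [e1, h4]
    calc _ ≤ ∑ n ∈ R, ∑ n' ∈ R, Y ^ 2 * ((if n' ≤ n then E n (n - n') else 0)
            + (if n ≤ n' then E n' (n' - n) else 0)) :=
          norm_sum_le_of_le _ fun n hn => norm_sum_le_of_le _ fun n' hn' => hD n hn n' hn'
      _ = Y ^ 2 * (∑ n ∈ R, ∑ n' ∈ R, (if n' ≤ n then E n (n - n') else 0)
            + ∑ n' ∈ R, ∑ n ∈ R, (if n ≤ n' then E n' (n' - n) else 0)) := by
          have : ∑ n' ∈ R, ∑ n ∈ R, (if n ≤ n' then E n' (n' - n) else 0)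
              = ∑ n ∈ R, ∑ n' ∈ R, (if n ≤ n' then E n' (n' - n) else 0) := sum_comm
          conv_rhs => enter [2, 2]; rw [this]
          rw [← sum_add_distrib, mul_sum]
          apply sum_congr rfl
          intro n _
          rw [← sum_add_distrib, mul_sum]
      _ ≤ Y ^ 2 * (∑ n ∈ R, ∑ h ∈ range n, E n h + ∑ n ∈ R, ∑ h ∈ range n, E n h) := by
          gcongr with n hn n hn
          · exact hin n hn
          · exact hin n hn
      _ ≤ _ := by
          gcongr
          linarith
  have hlogx : 0 ≤ Real.log x := Real.log_natCast_nonneg x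
  rw [h1]
  calc _ ≤ (∑ m ∈ R, ‖∑ n ∈ R, g m n‖) ^ 2 := by gcongr
    _ ≤ _ := h3
    _ ≤ ℓ * (Y ^ 2 * (2 * (ℓ ^ 2 * (14 * x ^ 2 / U + 4 * q * x)))) := by
        gcongr
        · linarith
        · exact (sum_inv_Ioc U x).trans hℓx
    _ = _ := by ring

lemma sum_conv (f g : ArithmeticFunction ℝ) (x : ℕ) (α : ℝ) :
    ∑ n ∈ Ioc 0 x, (((f * g) n : ℝ) : ℂ) * ee (α * n) =
      ∑ m ∈ Ioc 0 x, ∑ n ∈ Ioc 0 (x / m), (f m : ℂ) * (g n : ℂ) * ee (α * (m * n)) := by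
  have h1 : ∀ n ∈ Ioc 0 x, (((f * g) n : ℝ) : ℂ) * ee (α * n) =
      ∑ p ∈ Ioc 0 x ×ˢ Ioc 0 x,
        if p.1 * p.2 = n then (f p.1 : ℂ) * (g p.2 : ℂ) * ee (α * (p.1 * p.2)) else 0 := by
    intro n hn
    rw [mem_Ioc] at hn
    rw [← sum_filter, ArithmeticFunction.mul_apply,
      Nat.divisorsAntidiagonal_eq_prod_filter_of_le hn.1.ne' hn.2]
    push_cast
    rw [sum_mul]
    apply sum_congr rfl
    intro p hp
    have := (mem_filter.1 hp).2
    rw [← this]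
    push_cast
    rfl
  rw [sum_congr rfl h1, sum_comm, sum_product]
  apply sum_congr rfl
  intro m hm
  rw [mem_Ioc] at hm
  have h2 : Ioc 0 (x / m) ⊆ Ioc 0 x := fun n hn => by
    rw [mem_Ioc] at *
    exact ⟨hn.1, hn.2.trans (Nat.div_le_self _ _)⟩
  rw [← sum_subset h2]
  · apply sum_congr rfl
    intro n hn
    rw [mem_Ioc, Nat.le_div_iff_mul_le hm.1] at hn
    rw [sum_ite_eq, if_pos]
    rw [mem_Ioc, mul_comm]
    exact ⟨Nat.mul_pos hn.1 hm.1, hn.2⟩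
  · intro n hn hn2
    rw [mem_Ioc] at hn
    rw [mem_Ioc, Nat.le_div_iff_mul_le hm.1] at hn2
    apply sum_eq_zero
    intro k hk
    rw [mem_Ioc] at hk
    rw [if_neg]
    intro h
    apply hn2
    refine ⟨hn.1, ?_⟩
    rw [mul_comm]; simp only at h; omega

/-- Truncation of an arithmetic function to `n ≤ U`. -/
def loPart (U : ℕ) (f : ArithmeticFunction ℝ) : ArithmeticFunction ℝ :=
  ⟨fun n => if n ≤ U then f n else 0, by simp⟩

/-- Truncation of an arithmetic function to `n > U`. -/
def hiPart (U : ℕ) (f : ArithmeticFunction ℝ) : ArithmeticFunction ℝ :=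
  ⟨fun n => if n ≤ U then 0 else f n, by simp⟩

lemma loPart_apply (U : ℕ) (f : ArithmeticFunction ℝ) (n : ℕ) :
    loPart U f n = if n ≤ U then f n else 0 := rfl

lemma hiPart_apply (U : ℕ) (f : ArithmeticFunction ℝ) (n : ℕ) :
    hiPart U f n = if n ≤ U then 0 else f n := rfl

lemma lo_add_hi (U : ℕ) (f : ArithmeticFunction ℝ) : loPart U f + hiPart U f = f := by
  ext n
  rw [ArithmeticFunction.add_apply, loPart_apply, hiPart_apply]
  split_ifs <;> simp

/-- Real valued Möbius function. -/
def muR : ArithmeticFunction ℝ := ((ArithmeticFunction.moebius : ArithmeticFunction ℤ) : ArithmeticFunction ℝ)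

/-- Real valued zeta function. -/
def zeR : ArithmeticFunction ℝ := ((ArithmeticFunction.zeta : ArithmeticFunction ℕ) : ArithmeticFunction ℝ)

/-- Real von Mangoldt function. -/
noncomputable def laR : ArithmeticFunction ℝ := ArithmeticFunction.vonMangoldt

lemma vaughan (U : ℕ) : laR = loPart U laR + loPart U muR * ArithmeticFunction.log
    - (loPart U muR * loPart U laR) * zeR + hiPart U muR * (hiPart U laR * zeR) := by
  have h1 : (ArithmeticFunction.log : ArithmeticFunction ℝ) = laR * zeR :=
    ArithmeticFunction.vonMangoldt_mul_zeta.symm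
  have h2 : muR * zeR = 1 := ArithmeticFunction.coe_moebius_mul_coe_zeta
  have h3 := lo_add_hi U laR
  have h4 := lo_add_hi U muR
  rw [h1]
  linear_combination h3 * (loPart U muR * zeR - 1) + (-hiPart U laR) * h2 + h4 * (- hiPart U laR * zeR)

lemma laR_nonneg (n : ℕ) : 0 ≤ laR n := ArithmeticFunction.vonMangoldt_nonneg

lemma muR_abs (n : ℕ) : |muR n| ≤ 1 := by
  unfold muR
  rw [ArithmeticFunction.intCoe_apply]
  exact_mod_cast ArithmeticFunction.abs_moebius_le_one

lemma zeR_nonneg (n : ℕ) : 0 ≤ zeR n := by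
  unfold zeR; rw [ArithmeticFunction.natCoe_apply]; positivity

lemma zeR_pos {n : ℕ} (hn : 0 < n) : zeR n = 1 := by
  unfold zeR; rw [ArithmeticFunction.natCoe_apply, ArithmeticFunction.zeta_apply, if_neg hn.ne']; simp

lemma conv_abs_le_log (f g : ArithmeticFunction ℝ) (hf : ∀ n, |f n| ≤ laR n) (hg : ∀ n, |g n| ≤ 1)
    (n : ℕ) : |(g * f) n| ≤ Real.log n := by
  have h1 : Real.log n = (zeR * laR) n := by
    have : laR * zeR = ArithmeticFunction.log := ArithmeticFunction.vonMangoldt_mul_zeta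
    rw [mul_comm, this, ArithmeticFunction.log_apply]
  rw [h1, ArithmeticFunction.mul_apply, ArithmeticFunction.mul_apply]
  refine (abs_sum_le_sum_abs _ _).trans (sum_le_sum fun p hp => ?_)
  have hp1 : 0 < p.1 := Nat.pos_of_ne_zero (Nat.ne_zero_of_mem_divisorsAntidiagonal hp).1
  rw [abs_mul, zeR_pos hp1]
  exact mul_le_mul (hg _) (hf _) (abs_nonneg _) zero_le_one

lemma lo_la_abs (U n : ℕ) : |loPart U laR n| ≤ laR n := by
  rw [loPart_apply]; split_ifs
  · rw [abs_of_nonneg (laR_nonneg n)]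
  · simpa using laR_nonneg n

lemma hi_la_abs (U n : ℕ) : |hiPart U laR n| ≤ laR n := by
  rw [hiPart_apply]; split_ifs
  · simpa using laR_nonneg n
  · rw [abs_of_nonneg (laR_nonneg n)]

lemma lo_mu_abs (U n : ℕ) : |loPart U muR n| ≤ 1 := by
  rw [loPart_apply]; split_ifs
  · exact muR_abs n
  · simp

lemma hi_mu_abs (U n : ℕ) : |hiPart U muR n| ≤ 1 := by
  rw [hiPart_apply]; split_ifs
  · simp
  · exact muR_abs n

lemma zeR_abs (n : ℕ) : |zeR n| ≤ 1 := by
  rcases Nat.eq_zero_or_pos n with h | h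
  · subst h; simp
  · rw [zeR_pos h]; simp

lemma dn_inv {α : ℝ} {a : ℤ} {q : ℕ} (hq : 0 < q) (hc : IsCoprime a (q : ℤ))
    (hα : |α - a / q| ≤ 1 / (q : ℝ) ^ 2) (k : ℕ) (hk : 0 < k) (hk2 : 2 * k ≤ q) :
    1 / (2 * (q : ℝ)) ≤ dn (α * k) := by
  have := near_lower hq hc hα (k : ℤ) (round (α * k)) (by omega)
    (by rw [abs_of_nonneg (by omega)]; exact_mod_cast hk2)
  simpa [dn] using this

lemma inner_le {α : ℝ} {a : ℤ} {q : ℕ} (hq : 0 < q) (hc : IsCoprime a (q : ℤ))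
    (hα : |α - a / q| ≤ 1 / (q : ℝ) ^ 2) (k : ℕ) (hk : 0 < k) (hk2 : 2 * k ≤ q) (A B : ℕ) :
    ‖∑ n ∈ Ioc A B, ee (α * k * n)‖ ≤ q := by
  have hq' : (0 : ℝ) < q := by exact_mod_cast hq
  have h1 := dn_inv hq hc hα k hk hk2
  have h2 := geom_bound (α * k) A B
  have h3 := mul_le_mul_of_nonneg_left h1 (norm_nonneg (∑ n ∈ Ioc A B, ee (α * k * n)))
  have h4 : ‖∑ n ∈ Ioc A B, ee (α * k * n)‖ * (1 / (2 * (q : ℝ)))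
      = ‖∑ n ∈ Ioc A B, ee (α * k * n)‖ / q / 2 := by field_simp
  rw [h4] at h3
  have h5 : ‖∑ n ∈ Ioc A B, ee (α * k * n)‖ / q ≤ 1 := by linarith
  rwa [div_le_one hq'] at h5

lemma inner_log_le {α : ℝ} {a : ℤ} {q : ℕ} (hq : 0 < q) (hc : IsCoprime a (q : ℤ))
    (hα : |α - a / q| ≤ 1 / (q : ℝ) ^ 2) (k : ℕ) (hk : 0 < k) (hk2 : 2 * k ≤ q) (B : ℕ) :
    ‖∑ n ∈ Ioc 0 B, ((Real.log n : ℝ) : ℂ) * ee (α * k * n)‖ ≤ q * (2 * Real.log B) := by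
  refine abel_mono (fun n => ee (α * k * n)) (fun n => Real.log n) ?_ ?_ q 0 B (Nat.zero_le _)
    (fun j _ _ => inner_le hq hc hα k hk hk2 0 j)
  · intro i j hij
    rcases Nat.eq_zero_or_pos i with h | h
    · subst h; simp; exact Real.log_natCast_nonneg j
    · exact Real.log_le_log (by exact_mod_cast h) (by exact_mod_cast hij)
  · exact fun n => Real.log_natCast_nonneg n

lemma log_mono_nat {m n : ℕ} (h : m ≤ n) : Real.log m ≤ Real.log n := by
  rcases Nat.eq_zero_or_pos m with h0 | h0
  · subst h0; simp; exact Real.log_natCast_nonneg n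
  · exact Real.log_le_log (by exact_mod_cast h0) (by exact_mod_cast h)

lemma sum_support_le (U x : ℕ) (F : ℕ → ℂ) (G : ℝ) (hG : 0 ≤ G) (h1 : ∀ m ∈ Ioc 0 x, m ≤ U → ‖F m‖ ≤ G)
    (h2 : ∀ m ∈ Ioc 0 x, U < m → F m = 0) : ‖∑ m ∈ Ioc 0 x, F m‖ ≤ U * G := by
  calc ‖∑ m ∈ Ioc 0 x, F m‖ ≤ ∑ m ∈ Ioc 0 x, ‖F m‖ := norm_sum_le _ _
    _ ≤ ∑ m ∈ Ioc 0 x, (if m ≤ U then G else 0) := by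
        refine sum_le_sum fun m hm => ?_
        split_ifs with h
        · exact h1 m hm h
        · rw [h2 m hm (by omega)]; simp
    _ = ∑ m ∈ (Ioc 0 x).filter (fun m => m ≤ U), G := by rw [sum_filter]
    _ ≤ ∑ m ∈ Ioc 0 U, G := by
        refine sum_le_sum_of_subset_of_nonneg (fun m hm => ?_) fun _ _ _ => hG
        rw [mem_filter, mem_Ioc] at hm
        rw [mem_Ioc]; omega
    _ = U * G := by simp

lemma lambda_sum {α : ℝ} {a : ℤ} {q : ℕ} (hq : 0 < q) (hc : IsCoprime a (q : ℤ))
    (hα : |α - a / q| ≤ 1 / (q : ℝ) ^ 2) (U x : ℕ) (hU : 0 < U) (hUq : 2 * U ^ 2 ≤ q) (ℓ : ℝ)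
    (hℓx : 1 + Real.log x ≤ ℓ) (hℓq : 1 + Real.log q ≤ ℓ) :
    ‖∑ n ∈ Ioc 0 x, (laR n : ℂ) * ee (α * n)‖ ≤
      ℓ ^ 3 * (4 * U ^ 2 * q + 6 * x / √U + 3 * √(q * x)) := by
  have hq' : (0 : ℝ) < q := by exact_mod_cast hq
  have hq1 : (1 : ℝ) ≤ q := by exact_mod_cast hq
  have hU' : (0 : ℝ) < U := by exact_mod_cast hU
  have hU1 : (1 : ℝ) ≤ U := by exact_mod_cast hU
  have hlogx : 0 ≤ Real.log x := Real.log_natCast_nonneg x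
  have hℓ1 : 1 ≤ ℓ := by linarith
  have hUU : U ≤ U ^ 2 := Nat.le_self_pow (by norm_num) U
  have S1 : ‖∑ n ∈ Ioc 0 x, (loPart U laR n : ℂ) * ee (α * n)‖ ≤ U * ℓ := by
    refine sum_support_le U x _ ℓ (by linarith) (fun m hm _ => ?_) (fun m _ h => ?_)
    · rw [norm_mul, norm_ee, mul_one, Complex.norm_real, Real.norm_eq_abs]
      refine (lo_la_abs U m).trans ?_
      have : laR m ≤ Real.log m := ArithmeticFunction.vonMangoldt_le_log
      have := log_mono_nat (mem_Ioc.1 hm).2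
      linarith
    · rw [loPart_apply, if_neg (by omega)]; simp
  have S2 : ‖∑ n ∈ Ioc 0 x, (((loPart U muR * ArithmeticFunction.log) n : ℝ) : ℂ) * ee (α * n)‖
      ≤ U * (q * (2 * ℓ)) := by
    rw [sum_conv]
    refine sum_support_le U x _ _ (by positivity) (fun m hm hmU => ?_) (fun m _ h => ?_)
    · have e : ∑ n ∈ Ioc 0 (x / m), (loPart U muR m : ℂ) * ((ArithmeticFunction.log n : ℝ) : ℂ)
          * ee (α * (m * n)) = (loPart U muR m : ℂ) *
          ∑ n ∈ Ioc 0 (x / m), ((Real.log n : ℝ) : ℂ) * ee (α * m * n) := by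
        rw [mul_sum]
        apply sum_congr rfl
        intro n _
        rw [ArithmeticFunction.log_apply, mul_assoc, mul_assoc α]
      rw [e, norm_mul, Complex.norm_real, Real.norm_eq_abs]
      have e1 := inner_log_le hq hc hα m (mem_Ioc.1 hm).1 (by omega) (x / m)
      have e2 := log_mono_nat (Nat.div_le_self x m)
      calc _ ≤ 1 * ((q : ℝ) * (2 * Real.log (x / m : ℕ))) := by
            gcongr
            exact lo_mu_abs U m
        _ ≤ _ := by rw [one_mul]; gcongr; linarith
    · rw [loPart_apply, if_neg (by omega)]; simp
  have S3 : ‖∑ n ∈ Ioc 0 x, ((((loPart U muR * loPart U laR) * zeR) n : ℝ) : ℂ) * ee (α * n)‖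
      ≤ ((U ^ 2 : ℕ) : ℝ) * (ℓ * q) := by
    rw [sum_conv]
    refine sum_support_le (U ^ 2) x _ _ (by positivity) (fun m hm hmU => ?_) (fun m _ h => ?_)
    · have e : ∑ n ∈ Ioc 0 (x / m), (((loPart U muR * loPart U laR) m : ℝ) : ℂ) * (zeR n : ℂ)
          * ee (α * (m * n)) = (((loPart U muR * loPart U laR) m : ℝ) : ℂ) *
          ∑ n ∈ Ioc 0 (x / m), ee (α * m * n) := by
        rw [mul_sum]
        apply sum_congr rfl
        intro n hn
        rw [zeR_pos (mem_Ioc.1 hn).1, mul_assoc α]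
        simp
      rw [e, norm_mul, Complex.norm_real, Real.norm_eq_abs]
      have e1 := inner_le hq hc hα m (mem_Ioc.1 hm).1 (by omega) 0 (x / m)
      have e2 := conv_abs_le_log (loPart U laR) (loPart U muR) (lo_la_abs U) (lo_mu_abs U) m
      have e3 := log_mono_nat (mem_Ioc.1 hm).2
      gcongr
      linarith
    · have : (loPart U muR * loPart U laR) m = 0 := by
        rw [ArithmeticFunction.mul_apply]
        apply sum_eq_zero
        intro p hp
        have hp := (Nat.mem_divisorsAntidiagonal.1 hp).1
        rw [loPart_apply, loPart_apply]
        by_cases h1 : p.1 ≤ U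
        · by_cases h2 : p.2 ≤ U
          · exfalso
            have := Nat.mul_le_mul h1 h2
            rw [hp, ← sq] at this
            omega
          · rw [if_neg h2]; simp
        · rw [if_neg h1]; simp
      rw [this]; simp
  have S4 : ‖∑ n ∈ Ioc 0 x, (((hiPart U muR * (hiPart U laR * zeR)) n : ℝ) : ℂ) * ee (α * n)‖
      ≤ ℓ ^ 3 * (6 * x / √U + 3 * √(q * x)) := by
    have hy0 : ∀ n, n ≤ U → (hiPart U laR * zeR) n = 0 := by
      intro n hn
      rw [ArithmeticFunction.mul_apply]
      apply sum_eq_zero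
      intro p hp
      have hp := Nat.mem_divisorsAntidiagonal.1 hp
      have : p.1 ≤ n := Nat.le_of_dvd (Nat.pos_of_ne_zero hp.2) ⟨p.2, hp.1.symm⟩
      rw [hiPart_apply, if_pos (by omega), zero_mul]
    have e : ∑ n ∈ Ioc 0 x, (((hiPart U muR * (hiPart U laR * zeR)) n : ℝ) : ℂ) * ee (α * n)
        = ∑ m ∈ Ioc U x, ∑ n ∈ Ioc U (x / m), (hiPart U muR m : ℂ) *
          (((hiPart U laR * zeR) n : ℝ) : ℂ) * ee (α * (m * n)) := by
      rw [sum_conv]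
      have hs : ∀ B, Ioc U B ⊆ Ioc 0 B := fun B n hn => by rw [mem_Ioc] at *; omega
      rw [← sum_subset (hs x)]
      · apply sum_congr rfl
        intro m _
        rw [← sum_subset (hs (x / m))]
        intro n hn hn2
        rw [mem_Ioc] at hn hn2
        rw [hy0 n (by omega)]; simp
      · intro m hm hm2
        rw [mem_Ioc] at hm hm2
        apply sum_eq_zero
        intro n _
        rw [hiPart_apply, if_pos (by omega)]; simp
    rw [e]
    have hb := bilin hq hc hα U x hU (by omega) ℓ hℓx hℓq (hiPart U muR)
      (fun n => (hiPart U laR * zeR : ArithmeticFunction ℝ) n) ℓ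
      (hi_mu_abs U) (fun n hn => by
        rw [mul_comm (hiPart U laR) zeR]
        refine (conv_abs_le_log (hiPart U laR) zeR (hi_la_abs U) zeR_abs n).trans ?_
        have e3 := log_mono_nat (mem_Ioc.1 hn).2
        linarith)
    refine le_of_sq_le_sq (hb.trans ?_) (by positivity)
    have f1 : (6 * x / √U) ^ 2 = 36 * (x ^ 2 / (U : ℝ)) := by
      rw [div_pow, Real.sq_sqrt hU'.le]; ring
    have f2 : (3 * √((q : ℝ) * x)) ^ 2 = 9 * (q * x) := by
      rw [mul_pow, Real.sq_sqrt (by positivity)]; ring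
    have f3 : 28 * x ^ 2 / (U : ℝ) + 8 * q * x ≤ (6 * x / √U + 3 * √(q * x)) ^ 2 := by
      have g1 : 0 ≤ 6 * x / √(U : ℝ) := by positivity
      have g2 : 0 ≤ 3 * √((q : ℝ) * x) := by positivity
      have g3 : 0 ≤ (x : ℝ) ^ 2 / U := by positivity
      have g4 : 0 ≤ (q : ℝ) * x := by positivity
      have g5 : 28 * x ^ 2 / (U : ℝ) = 28 * (x ^ 2 / (U : ℝ)) := by ring
      rw [add_sq, f1, f2, g5]
      nlinarith [mul_nonneg g1 g2]
    calc ℓ ^ 3 * ℓ ^ 2 * (28 * x ^ 2 / U + 8 * q * x) = ℓ ^ 5 * (28 * x ^ 2 / U + 8 * q * x) := by ring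
      _ ≤ ℓ ^ 6 * (6 * x / √U + 3 * √(q * x)) ^ 2 := by
          gcongr
          norm_num
      _ = _ := by ring
  have hsum : ∑ n ∈ Ioc 0 x, (laR n : ℂ) * ee (α * n) =
      ∑ n ∈ Ioc 0 x, (loPart U laR n : ℂ) * ee (α * n)
      + ∑ n ∈ Ioc 0 x, (((loPart U muR * ArithmeticFunction.log) n : ℝ) : ℂ) * ee (α * n)
      - ∑ n ∈ Ioc 0 x, ((((loPart U muR * loPart U laR) * zeR) n : ℝ) : ℂ) * ee (α * n)
      + ∑ n ∈ Ioc 0 x, (((hiPart U muR * (hiPart U laR * zeR)) n : ℝ) : ℂ) * ee (α * n) := by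
    rw [← sum_add_distrib, ← sum_sub_distrib, ← sum_add_distrib]
    apply sum_congr rfl
    intro n _
    have : laR n = loPart U laR n + (loPart U muR * ArithmeticFunction.log) n
      - ((loPart U muR * loPart U laR) * zeR) n + (hiPart U muR * (hiPart U laR * zeR)) n := by
      conv_lhs => rw [vaughan U]
      simp [sub_eq_add_neg]
    rw [this]
    push_cast
    ring
  rw [hsum]
  have hfin : (U : ℝ) * ℓ + U * (q * (2 * ℓ)) + ((U ^ 2 : ℕ) : ℝ) * (ℓ * q) ≤ ℓ ^ 3 * (4 * U ^ 2 * q) := by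
    have g1 : (U : ℝ) ≤ U ^ 2 * q := by nlinarith
    have g2 : (U : ℝ) * q ≤ U ^ 2 * q := by nlinarith
    have g3 : ℓ ≤ ℓ ^ 3 := le_self_pow₀ hℓ1 (by norm_num)
    push_cast
    calc _ = ℓ * (U + 2 * (U * q) + U ^ 2 * q) := by ring
      _ ≤ ℓ * (4 * U ^ 2 * q) := by gcongr; linarith
      _ ≤ _ := by gcongr
  calc _ ≤ (U : ℝ) * ℓ + U * (q * (2 * ℓ)) + ((U ^ 2 : ℕ) : ℝ) * (ℓ * q)
        + ℓ ^ 3 * (6 * x / √U + 3 * √(q * x)) := by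
        refine (norm_add_le _ _).trans (add_le_add ?_ S4)
        refine (norm_sub_le _ _).trans (add_le_add ?_ S3)
        exact (norm_add_le _ _).trans (add_le_add S1 S2)
    _ ≤ ℓ ^ 3 * (4 * U ^ 2 * q) + ℓ ^ 3 * (6 * x / √U + 3 * √(q * x)) := by gcongr
    _ = _ := by ring

/-- The exponential sum over primes. -/
noncomputable def Sp (N : ℕ) (α : ℝ) : ℂ := ∑ p ∈ primesUpTo N, ee (α * p)

lemma theta_sum {α : ℝ} {a : ℤ} {q : ℕ} (hq : 0 < q) (hc : IsCoprime a (q : ℤ))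
    (hα : |α - a / q| ≤ 1 / (q : ℝ) ^ 2) (U x : ℕ) (hU : 0 < U) (hUq : 2 * U ^ 2 ≤ q) (ℓ : ℝ)
    (hℓx : 1 + Real.log x ≤ ℓ) (hℓq : 1 + Real.log q ≤ ℓ) :
    ‖∑ n ∈ Ioc 0 x, ((if n.Prime then Real.log n else 0 : ℝ) : ℂ) * ee (α * n)‖ ≤
      ℓ ^ 3 * (4 * U ^ 2 * q + 6 * x / √U + 5 * √(q * x)) := by
  have hq1 : (1 : ℝ) ≤ q := by exact_mod_cast hq
  have hlogx : 0 ≤ Real.log x := Real.log_natCast_nonneg x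
  have hℓ1 : 1 ≤ ℓ := by linarith
  rcases Nat.eq_zero_or_pos x with h0 | h0
  · subst h0; simp; positivity
  have hx1 : (1 : ℝ) ≤ x := by exact_mod_cast h0
  have h1 : ∑ n ∈ Ioc 0 x, ((if n.Prime then Real.log n else 0 : ℝ) : ℂ) * ee (α * n) =
      ∑ n ∈ Ioc 0 x, (laR n : ℂ) * ee (α * n) -
      ∑ n ∈ Ioc 0 x, ((laR n - (if n.Prime then Real.log n else 0) : ℝ) : ℂ) * ee (α * n) := by
    rw [← sum_sub_distrib]
    apply sum_congr rfl
    intro n _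
    push_cast
    ring
  have h2 : ‖∑ n ∈ Ioc 0 x, ((laR n - (if n.Prime then Real.log n else 0) : ℝ) : ℂ) * ee (α * n)‖
      ≤ 2 * √x * Real.log x := by
    have e := Chebyshev.psi_sub_theta_le hx1
    refine le_trans ?_ e
    unfold Chebyshev.psi Chebyshev.theta
    rw [Nat.floor_natCast, sum_filter, ← sum_sub_distrib]
    refine norm_sum_le_of_le _ fun n _ => ?_
    rw [norm_mul, norm_ee, mul_one, Complex.norm_real, Real.norm_eq_abs, abs_of_nonneg]
    · rfl
    · split_ifs with hp
      · have : laR n = Real.log n := ArithmeticFunction.vonMangoldt_apply_prime hp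
        rw [this, sub_self]
      · rw [sub_zero]; exact laR_nonneg n
  have h3 := lambda_sum hq hc hα U x hU hUq ℓ hℓx hℓq
  rw [h1]
  have h4 : 2 * √(x : ℝ) * Real.log x ≤ ℓ ^ 3 * (2 * √(q * x)) := by
    have g3 : ℓ ≤ ℓ ^ 3 := le_self_pow₀ hℓ1 (by norm_num)
    have g4 : √(x : ℝ) ≤ √(q * x) := Real.sqrt_le_sqrt (by nlinarith)
    have g5 : Real.log x ≤ ℓ ^ 3 := by linarith
    calc 2 * √(x : ℝ) * Real.log x ≤ 2 * √(q * x) * ℓ ^ 3 := by gcongr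
      _ = _ := by ring
  have := norm_sub_le (∑ n ∈ Ioc 0 x, (laR n : ℂ) * ee (α * n))
    (∑ n ∈ Ioc 0 x, ((laR n - (if n.Prime then Real.log n else 0) : ℝ) : ℂ) * ee (α * n))
  linarith

lemma primes_sum {α : ℝ} {a : ℤ} {q : ℕ} (hq : 0 < q) (hc : IsCoprime a (q : ℤ))
    (hα : |α - a / q| ≤ 1 / (q : ℝ) ^ 2) (U N : ℕ) (hU : 0 < U) (hUq : 2 * U ^ 2 ≤ q) (ℓ : ℝ)
    (hℓx : 1 + Real.log N ≤ ℓ) (hℓq : 1 + Real.log q ≤ ℓ) :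
    ‖Sp N α‖ ≤ 2 * (ℓ ^ 3 * (4 * U ^ 2 * q + 6 * N / √U + 5 * √(q * N))) := by
  have hlogx : 0 ≤ Real.log N := Real.log_natCast_nonneg N
  have hℓ1 : 1 ≤ ℓ := by linarith
  have hl2 : 1 / 2 < Real.log 2 := by linarith [Real.log_two_gt_d9]
  set w : ℕ → ℝ := fun n => 1 / Real.log (max n 2 : ℕ) with hw
  have hwpos : ∀ n, 0 < Real.log (max n 2 : ℕ) := fun n => by
    have : Real.log (2 : ℕ) ≤ Real.log (max n 2 : ℕ) := log_mono_nat (le_max_right _ _)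
    push_cast at this ⊢
    linarith
  have h1 : Sp N α = ∑ n ∈ Ioc 0 N, (w n : ℂ) *
      (((if n.Prime then Real.log n else 0 : ℝ) : ℂ) * ee (α * n)) := by
    unfold Sp primesUpTo
    have : (range (N + 1)).filter Nat.Prime = (Ioc 0 N).filter Nat.Prime := by
      ext n
      simp only [mem_filter, mem_range, mem_Ioc]
      constructor
      · rintro ⟨h, hp⟩; exact ⟨⟨hp.pos, by omega⟩, hp⟩
      · rintro ⟨h, hp⟩; exact ⟨by omega, hp⟩
    rw [this, sum_filter]
    apply sum_congr rfl
    intro n _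
    split_ifs with hp
    · have e1 : max n 2 = n := max_eq_left hp.two_le
      have e2 := hwpos n
      simp only [hw, e1] at e2 ⊢
      rw [← mul_assoc, ← Complex.ofReal_mul, one_div_mul_cancel e2.ne']
      simp
    · simp
  rw [h1]
  refine (abel_anti _ w ?_ (fun n => by have := hwpos n; simp only [hw]; positivity)
    (ℓ ^ 3 * (4 * U ^ 2 * q + 6 * N / √U + 5 * √(q * N))) 0 N (Nat.zero_le _) ?_).trans ?_
  · intro i j hij
    simp only [hw]
    exact one_div_le_one_div_of_le (hwpos i) (log_mono_nat (max_le_max hij le_rfl))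
  · intro j _ hj
    refine (theta_sum hq hc hα U j hU hUq ℓ ?_ hℓq).trans ?_
    · linarith [log_mono_nat hj]
    · have hj' : (j : ℝ) ≤ N := by exact_mod_cast hj
      gcongr
  · rw [mul_comm]
    have : w 0 ≤ 2 := by
      simp only [hw]
      rw [div_le_iff₀ (hwpos 0)]
      simp
      linarith
    gcongr

noncomputable def LL (N : ℕ) : ℕ := ⌈1 + Real.log N⌉₊

lemma LL_ge (N : ℕ) : 1 + Real.log N ≤ (LL N : ℝ) := Nat.le_ceil _

lemma LL_one {N : ℕ} (hN : 1 ≤ N) : 1 ≤ LL N := by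
  have h := LL_ge N
  have h2 : 0 ≤ Real.log N := Real.log_natCast_nonneg N
  have : (1:ℝ) ≤ LL N := by linarith
  exact_mod_cast this

lemma LL_mono {M N : ℕ} (h : M ≤ N) : LL M ≤ LL N := by
  unfold LL
  apply Nat.ceil_mono
  linarith [log_mono_nat h]

lemma LL_le (N : ℕ) : (LL N : ℝ) ≤ 2 + Real.log N := by
  have h2 : 0 ≤ Real.log N := Real.log_natCast_nonneg N
  have := Nat.ceil_lt_add_one (a := 1 + Real.log N) (by linarith)
  unfold LL; linarith

lemma LL_small (E : ℕ) (K : ℝ) : ∃ N0 : ℕ, ∀ N : ℕ, N0 ≤ N → K * (LL N : ℝ) ^ E < N := by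
  have h := (Real.isLittleO_pow_log_id_atTop (n := E)).def (c := 1 / ((|K| + 1) * 3 ^ E)) (by positivity)
  have h2 := (tendsto_natCast_atTop_atTop (R := ℝ)).eventually h
  obtain ⟨N1, hN1⟩ := Filter.eventually_atTop.1 h2
  refine ⟨max N1 3, fun N hN => ?_⟩
  have h3 := hN1 N (le_trans (le_max_left _ _) hN)
  have hN3 : 3 ≤ N := le_trans (le_max_right _ _) hN
  have hN3' : (3:ℝ) ≤ N := by exact_mod_cast hN3
  have hlog : 1 ≤ Real.log N := by
    rw [Real.le_log_iff_exp_le (by linarith)]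
    have := Real.exp_one_lt_d9
    linarith
  have hL := LL_le N
  have hL3 : (LL N : ℝ) ≤ 3 * Real.log N := by linarith
  have h4 : (LL N : ℝ) ^ E ≤ 3 ^ E * Real.log N ^ E := by
    rw [← mul_pow]; exact pow_le_pow_left₀ (by positivity) hL3 E
  simp only [id, Real.norm_eq_abs, Nat.abs_cast] at h3
  rw [abs_of_nonneg (by positivity)] at h3
  have hK : K < |K| + 1 := by linarith [le_abs_self K]
  have hpos : 0 < (LL N : ℝ) ^ E := by
    have : (0:ℝ) < LL N := by linarith [LL_ge N]
    positivity
  calc K * (LL N : ℝ) ^ E < (|K| + 1) * (LL N : ℝ) ^ E := by nlinarith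
    _ ≤ (|K| + 1) * (3 ^ E * Real.log N ^ E) := by gcongr
    _ ≤ (|K| + 1) * (3 ^ E * (1 / ((|K| + 1) * 3 ^ E) * N)) := by gcongr
    _ = N := by field_simp

lemma card_primesUpTo (N : ℕ) : (primesUpTo N).card ≤ N := by
  have : primesUpTo N ⊆ Finset.Icc 1 N := by
    intro p hp
    simp only [primesUpTo, Finset.mem_filter, Finset.mem_range] at hp
    simp only [Finset.mem_Icc]
    exact ⟨hp.2.one_lt.le, by omega⟩
  simpa using Finset.card_le_card this

lemma norm_Sp_le (N : ℕ) (α : ℝ) : ‖Sp N α‖ ≤ N := by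
  unfold Sp
  refine (norm_sum_le _ _).trans ?_
  simp only [norm_ee, Finset.sum_const, nsmul_eq_mul, mul_one]
  exact_mod_cast card_primesUpTo N

lemma liouville_quad {η : ℝ} (hη : IsQuadraticIrrational η) :
    ∃ c : ℝ, 0 < c ∧ ∀ r s : ℤ, s ≠ 0 → 1 ≤ c * (s:ℝ) ^ 2 * |η - r / s| := by
  obtain ⟨hi, A, B, C, hA, h⟩ := hη
  have hdeg : (Polynomial.C A * Polynomial.X ^ 2 + Polynomial.C B * Polynomial.X
      + Polynomial.C C : Polynomial ℤ).natDegree = 2 := Polynomial.natDegree_quadratic hA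
  obtain ⟨c, hc, hb⟩ := Liouville.exists_pos_real_of_irrational_root hi
    (f := Polynomial.C A * Polynomial.X ^ 2 + Polynomial.C B * Polynomial.X + Polynomial.C C)
    (by intro h0; rw [h0] at hdeg; simp at hdeg) (by simpa using h)
  rw [hdeg] at hb
  have key : ∀ (r : ℤ) (s : ℕ), 0 < s → 1 ≤ c * (s:ℝ) ^ 2 * |η - r / s| := by
    intro r s hs
    have := hb r (s - 1)
    have e : ((s - 1 : ℕ) : ℝ) + 1 = s := by
      have : s - 1 + 1 = s := by omega
      exact_mod_cast this
    rw [e] at this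
    linarith
  refine ⟨c, hc, fun r s hs => ?_⟩
  rcases lt_or_gt_of_ne hs with h1 | h1
  · have := key (-r) s.natAbs (by omega)
    have e : ((s.natAbs : ℕ) : ℝ) = -s := by
      have : ((s.natAbs : ℕ) : ℤ) = -s := by omega
      rw [← Int.cast_natCast, this]; push_cast; rfl
    rw [e] at this
    push_cast at this
    rw [neg_div_neg_eq, neg_sq] at this
    exact this
  · have := key r s.natAbs (by omega)
    have e : ((s.natAbs : ℕ) : ℝ) = s := by
      have : ((s.natAbs : ℕ) : ℤ) = s := by omega
      rw [← Int.cast_natCast, this]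
    rw [e] at this
    exact this

lemma minor_bound (A N : ℕ) (hN : 1 ≤ N) (α : ℝ) (q : ℚ)
    (h1 : |α - q| ≤ 1 / (q.den : ℝ) ^ 2)
    (h2 : 2 * LL N ^ (4 * (A + 3)) ≤ q.den) (h3 : q.den * LL N ^ (5 * (A + 3)) ≤ N) :
    ‖Sp N α‖ ≤ 30 * N / (LL N : ℝ) ^ A := by
  have hL1 := LL_one hN
  have hq : q.den ≤ N := le_trans (Nat.le_mul_of_pos_right _ (by positivity)) h3
  have hlq := log_mono_nat hq
  have hl := LL_ge N
  have hc : IsCoprime q.num (q.den : ℤ) := by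
    rw [Int.isCoprime_iff_nat_coprime]; simpa using q.reduced
  have hcast : (q:ℝ) = (q.num : ℝ) / (q.den : ℝ) := Rat.cast_def q
  rw [hcast] at h1
  have := primes_sum (N := N) q.den_pos hc h1 (LL N ^ (2 * (A + 3))) (by positivity)
    (by rw [← pow_mul]; convert h2 using 2; ring) (LL N : ℝ) hl (by linarith)
  refine this.trans ?_
  set L : ℝ := (LL N : ℝ) with hL
  have hL1' : 1 ≤ L := by rw [hL]; exact_mod_cast hL1
  have hL0 : 0 < L := by linarith
  have h3' : (q.den : ℝ) * L ^ (5 * (A + 3)) ≤ N := by rw [hL]; exact_mod_cast h3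
  set d : ℝ := (q.den : ℝ)
  have hd0 : 0 ≤ d := by positivity
  set P := L ^ (A + 3) with hP
  have hP1 : 1 ≤ P := one_le_pow₀ hL1'
  have hP0 : 0 < P := by linarith
  have e5 : L ^ (5 * (A + 3)) = P ^ 5 := by rw [hP, ← pow_mul]; congr 1; ring
  have e2 : L ^ (2 * (A + 3)) = P ^ 2 := by rw [hP, ← pow_mul]; congr 1; ring
  rw [e5] at h3'
  push_cast
  rw [← hL, e2, Real.sqrt_sq hP0.le]
  have t1 : (P^2)^2 * d ≤ N / P := by
    rw [le_div_iff₀ hP0]; calc _ = d * P^5 := by ring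
      _ ≤ _ := h3'
  have t2 : √(d * N) ≤ N / P := by
    apply Real.sqrt_le_iff.2 ⟨by positivity, ?_⟩
    rw [div_pow, le_div_iff₀ (by positivity)]
    have : d * P^2 ≤ N := by
      refine le_trans ?_ h3'
      gcongr
      · norm_num
    have hn : (0:ℝ) ≤ N := by positivity
    nlinarith
  calc 2 * (L ^ 3 * (4 * (P^2)^2 * d + 6 * N / P + 5 * √(d*N)))
      ≤ 2 * (L ^ 3 * (4 * (N/P) + 6 * (N / P) + 5 * (N/P))) := by
        gcongr 2 * (L^3 * (?_ + ?_ + ?_))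
        · rw [mul_assoc]; gcongr
        · exact le_of_eq (by ring)
        · gcongr
    _ = 30 * N / L ^ A := by
        rw [hP, pow_add]; field_simp; ring

lemma min_lemma {η : ℝ} (hη : IsQuadraticIrrational η) (A B : ℕ) :
    ∃ K : ℝ, 0 < K ∧ ∀ N : ℕ, 2 ≤ N → ∀ (α : ℝ) (k : ℤ), k ≠ 0 → |(k:ℝ)| ≤ 2 * (LL N : ℝ) ^ B →
      ‖Sp N α‖ ≤ K * N / (LL N : ℝ) ^ A ∨ ‖Sp N (α + k * η)‖ ≤ K * N / (LL N : ℝ) ^ A := by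
  obtain ⟨c, hc, hl⟩ := liouville_quad hη
  obtain ⟨N1, hN1⟩ := LL_small (2 * B + 21 * (A + 3)) (c * 128)
  obtain ⟨N2, hN2⟩ := LL_small (5 * (A + 3)) 1
  set N0 := max (max N1 N2) 2
  refine ⟨max 30 ((LL N0 : ℝ) ^ A), by positivity, fun N hN α k hk hkB => ?_⟩
  have hL1 := LL_one (N := N) (by omega)
  have hL1' : (1:ℝ) ≤ LL N := by exact_mod_cast hL1
  have hLpos : (0:ℝ) < (LL N : ℝ) ^ A := by positivity
  by_cases hbig : N < N0
  · left
    refine (norm_Sp_le N α).trans ?_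
    rw [le_div_iff₀ hLpos]
    have : (LL N : ℝ) ^ A ≤ max 30 ((LL N0 : ℝ) ^ A) := by
      refine le_trans ?_ (le_max_right _ _)
      have := LL_mono hbig.le
      gcongr
    nlinarith [(Nat.cast_nonneg N : (0:ℝ) ≤ N)]
  push Not at hbig
  have hb1 := hN1 N (le_trans (le_trans (le_max_left _ _) (le_max_left _ _)) hbig)
  have hb2 := hN2 N (le_trans (le_trans (le_max_right _ _) (le_max_left _ _)) hbig)
  have hb2' : LL N ^ (5 * (A + 3)) < N := by rw [one_mul] at hb2; exact_mod_cast hb2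
  have hLp : 0 < LL N ^ (5 * (A + 3)) := by positivity
  set n := N / LL N ^ (5 * (A + 3)) with hn
  have hn0 : 0 < n := Nat.div_pos hb2'.le hLp
  have hn1 : n * LL N ^ (5 * (A + 3)) ≤ N := Nat.div_mul_le_self _ _
  have hn2 : N < (n + 1) * LL N ^ (5 * (A + 3)) := by
    rw [mul_comm]; exact Nat.lt_mul_div_succ N hLp
  obtain ⟨q1, hq1, hd1⟩ := Real.exists_rat_abs_sub_le_and_den_le α hn0
  obtain ⟨q2, hq2, hd2⟩ := Real.exists_rat_abs_sub_le_and_den_le (α + k * η) hn0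
  have gen : ∀ (β : ℝ) (q : ℚ), |β - q| ≤ 1 / ((n + 1 : ℝ) * q.den) → q.den ≤ n →
      2 * LL N ^ (4 * (A + 3)) ≤ q.den →
      ‖Sp N β‖ ≤ max 30 ((LL N0 : ℝ) ^ A) * N / (LL N : ℝ) ^ A := by
    intro β q h1 h2 h3
    refine (minor_bound A N (by omega) β q (h1.trans ?_) h3 ?_).trans ?_
    · have hdp : (0:ℝ) < q.den := by exact_mod_cast q.den_pos
      have : (q.den:ℝ) ≤ n := by exact_mod_cast h2
      apply one_div_le_one_div_of_le (by positivity)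
      nlinarith
    · exact le_trans (Nat.mul_le_mul_right _ h2) hn1
    · gcongr; exact le_max_left _ _
  by_cases c1 : 2 * LL N ^ (4 * (A + 3)) ≤ q1.den
  · exact Or.inl (gen _ _ hq1 hd1 c1)
  by_cases c2 : 2 * LL N ^ (4 * (A + 3)) ≤ q2.den
  · exact Or.inr (gen _ _ hq2 hd2 c2)
  exfalso
  push Not at c1 c2
  have p1 : (0:ℝ) < q1.den := by exact_mod_cast q1.den_pos
  have p2 : (0:ℝ) < q2.den := by exact_mod_cast q2.den_pos
  have hk' : (k:ℝ) ≠ 0 := by exact_mod_cast hk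
  have hk1 : 1 ≤ |(k:ℝ)| := by exact_mod_cast Int.one_le_abs hk
  have hs : k * q1.den * q2.den ≠ 0 := by
    have := q1.den_pos; have := q2.den_pos
    exact mul_ne_zero (mul_ne_zero hk (by exact_mod_cast q1.den_nz)) (by exact_mod_cast q2.den_nz)
  have := hl (q2.num * q1.den - q1.num * q2.den) (k * q1.den * q2.den) hs
  have hc1 : (q1:ℝ) = (q1.num : ℝ) / (q1.den : ℝ) := Rat.cast_def q1
  have hc2 : (q2:ℝ) = (q2.num : ℝ) / (q2.den : ℝ) := Rat.cast_def q2
  have eq : η - ((q2.num * q1.den - q1.num * q2.den : ℤ):ℝ) / ((k * q1.den * q2.den : ℤ) : ℝ)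
      = (k * η - (q2 - q1)) / k := by
    rw [hc1, hc2]; push_cast; field_simp
  rw [eq] at this
  have L5 : (N:ℝ) < (n + 1) * (LL N : ℝ) ^ (5 * (A + 3)) := by exact_mod_cast hn2
  have b1 : |k * η - (q2 - q1)| ≤ 2 / (n + 1 : ℝ) := by
    have e : k * η - ((q2:ℝ) - q1) = (α + k * η - q2) - (α - q1) := by ring
    rw [e]
    have q1' : (1:ℝ) ≤ q1.den := by exact_mod_cast q1.den_pos
    have q2' : (1:ℝ) ≤ q2.den := by exact_mod_cast q2.den_pos
    have a1 : 1 / ((n + 1 : ℝ) * q1.den) ≤ 1 / (n + 1) := by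
      apply one_div_le_one_div_of_le (by positivity); nlinarith
    have a2 : 1 / ((n + 1 : ℝ) * q2.den) ≤ 1 / (n + 1) := by
      apply one_div_le_one_div_of_le (by positivity); nlinarith
    have e2 : 2 / (n + 1 : ℝ) = 1 / (n+1) + 1/(n+1) := by ring
    rw [e2]
    exact (abs_sub _ _).trans (by linarith)
  have b2 : |(k * η - ((q2:ℝ) - q1)) / k| ≤ 2 / (n+1 : ℝ) := by
    rw [abs_div]
    exact (div_le_self (abs_nonneg _) hk1).trans b1
  have d1 : (q1.den:ℝ) ≤ 2 * (LL N : ℝ) ^ (4 * (A + 3)) := by exact_mod_cast c1.le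
  have d2 : (q2.den:ℝ) ≤ 2 * (LL N : ℝ) ^ (4 * (A + 3)) := by exact_mod_cast c2.le
  have s2 : ((k * q1.den * q2.den : ℤ) : ℝ) ^ 2 ≤ 64 * (LL N : ℝ) ^ (2 * B + 16 * (A + 3)) := by
    push_cast
    rw [← sq_abs, abs_mul, abs_mul, abs_of_pos p1, abs_of_pos p2]
    calc (|(k:ℝ)| * q1.den * q2.den) ^ 2 ≤ (2 * (LL N : ℝ) ^ B * (2 * (LL N : ℝ) ^ (4 * (A + 3)))
          * (2 * (LL N : ℝ) ^ (4 * (A + 3)))) ^ 2 := by gcongr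
      _ = 64 * (LL N : ℝ) ^ (2 * B + 16 * (A + 3)) := by ring
  have : (1:ℝ) ≤ c * (64 * (LL N : ℝ) ^ (2 * B + 16 * (A + 3))) * (2 / (n+1)) := by
    refine this.trans ?_
    gcongr
  have h5 : (n + 1 : ℝ) ≤ c * 128 * (LL N : ℝ) ^ (2 * B + 16 * (A + 3)) := by
    rw [mul_div_assoc', le_div_iff₀ (by positivity)] at this
    linarith
  have : (N:ℝ) < c * 128 * (LL N : ℝ) ^ (2 * B + 21 * (A + 3)) := by
    calc (N:ℝ) < _ := L5
      _ ≤ c * 128 * (LL N : ℝ) ^ (2 * B + 16 * (A + 3)) * (LL N : ℝ) ^ (5 * (A + 3)) := by gcongr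
      _ = _ := by rw [mul_assoc (c*128), ← pow_add]; congr 2; ring
  linarith

lemma ee_orth (R : ℕ) (hR : 0 < R) (h : ℤ) (hh : |h| < R) :
    ∑ j ∈ range R, ee ((j:ℝ) / R * h) = if h = 0 then (R:ℂ) else 0 := by
  have hR' : (R:ℝ) ≠ 0 := by positivity
  split_ifs with h0
  · subst h0; simp [ee_zero]
  · have e : ∀ j ∈ range R, ee ((j:ℝ) / R * h) = ee ((h:ℝ) / R) ^ j := by
      intro j _; rw [← ee_nat_mul]; congr 1; ring
    rw [sum_congr rfl e]
    have hne : ee ((h:ℝ) / R) ≠ 1 := by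
      unfold ee
      intro h1
      rw [Complex.exp_eq_one_iff] at h1
      obtain ⟨n, hn⟩ := h1
      have h2 : (2 * Real.pi * Complex.I) ≠ 0 := Complex.two_pi_I_ne_zero
      have h3 : (((h:ℝ) / R : ℝ) : ℂ) = n := by
        apply mul_left_cancel₀ h2; rw [hn]; ring
      have h4 : (h:ℝ) / R = n := by exact_mod_cast h3
      rw [div_eq_iff hR'] at h4
      have h5 : h = n * R := by exact_mod_cast h4
      have hn0 : n ≠ 0 := by rintro rfl; apply h0; simpa using h5
      rw [h5, abs_mul] at hh
      have := Int.one_le_abs hn0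
      simp only [Nat.abs_cast] at hh
      nlinarith
    rw [geom_sum_eq hne, ← ee_nat_mul]
    have : (R:ℝ) * ((h:ℝ) / R) = (h:ℤ) := by field_simp
    rw [this, ee_int]; simp

lemma mem_primesUpTo_le {N p : ℕ} (hp : p ∈ primesUpTo N) : p ≤ N := by
  simp only [primesUpTo, Finset.mem_filter, Finset.mem_range] at hp
  omega

lemma parseval_Sp (N R : ℕ) (hR : N < R) (β : ℝ) :
    ∑ j ∈ range R, ‖Sp N ((j:ℝ) / R + β)‖ ^ 2 = R * (primesUpTo N).card := by
  have key : ∑ j ∈ range R, ((‖Sp N ((j:ℝ) / R + β)‖ ^ 2 : ℝ) : ℂ)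
      = ((R * (primesUpTo N).card : ℝ) : ℂ) := by
    have e : ∀ j ∈ range R, ((‖Sp N ((j:ℝ) / R + β)‖ ^ 2 : ℝ) : ℂ)
        = ∑ p ∈ primesUpTo N, ∑ q ∈ primesUpTo N,
          ee (β * p) * ee (-(β * q)) * ee ((j:ℝ) / R * ((p - q : ℤ) : ℝ)) := by
      intro j _
      push_cast
      rw [← Complex.mul_conj']
      unfold Sp
      rw [map_sum, sum_mul_sum]
      refine sum_congr rfl fun p _ => sum_congr rfl fun q _ => ?_
      rw [ee_conj, ← ee_add, ← ee_add, ← ee_add]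
      congr 1; push_cast; ring
    rw [sum_congr rfl e, sum_comm]
    have e2 : ∀ p ∈ primesUpTo N, ∑ j ∈ range R, ∑ q ∈ primesUpTo N,
          ee (β * p) * ee (-(β * q)) * ee ((j:ℝ) / R * ((p - q : ℤ) : ℝ)) = (R:ℂ) := by
      intro p hp
      rw [sum_comm]
      have e3 : ∀ q ∈ primesUpTo N, ∑ j ∈ range R,
          ee (β * p) * ee (-(β * q)) * ee ((j:ℝ) / R * ((p - q : ℤ) : ℝ))
          = if q = p then (R:ℂ) else 0 := by
        intro q hq
        have h1 := mem_primesUpTo_le hp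
        have h2 := mem_primesUpTo_le hq
        rw [← mul_sum, ee_orth R (by omega) _ (by rw [abs_lt]; omega)]
        by_cases hqp : q = p
        · subst hqp
          simp [← ee_add, ee_zero]
        · rw [if_neg hqp, if_neg (by omega), mul_zero]
      rw [sum_congr rfl e3]
      simp [hp]
    rw [sum_congr rfl e2]
    simp [mul_comm]
  exact_mod_cast key

noncomputable def TT (N : ℕ) (β1 β2 β3 : ℝ) : ℂ :=
  ∑ t ∈ (primesUpTo N ×ˢ primesUpTo N ×ˢ primesUpTo N).filter (fun t => t.1 + t.2.1 + t.2.2 = N),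
    ee (β1 * t.1) * ee (β2 * t.2.1) * ee (β3 * t.2.2)

lemma TT_eq (N R : ℕ) (hR : R = 3 * N + 1) (β1 β2 β3 : ℝ) :
    (R:ℂ) * TT N β1 β2 β3 = ∑ j ∈ range R, Sp N ((j:ℝ) / R + β1) * Sp N ((j:ℝ) / R + β2)
      * Sp N ((j:ℝ) / R + β3) * ee (-((j:ℝ) / R * N)) := by
  have e : ∀ j ∈ range R, Sp N ((j:ℝ) / R + β1) * Sp N ((j:ℝ) / R + β2)
      * Sp N ((j:ℝ) / R + β3) * ee (-((j:ℝ) / R * N))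
      = ∑ t ∈ primesUpTo N ×ˢ primesUpTo N ×ˢ primesUpTo N,
        ee (β1 * t.1) * ee (β2 * t.2.1) * ee (β3 * t.2.2)
          * ee ((j:ℝ) / R * ((t.1 + t.2.1 + t.2.2 - N : ℤ) : ℝ)) := by
    intro j _
    unfold Sp
    rw [sum_product]
    simp only [sum_product]
    rw [mul_assoc, mul_assoc, sum_mul]
    refine sum_congr rfl fun p _ => ?_
    rw [sum_mul, mul_sum]
    refine sum_congr rfl fun q _ => ?_
    rw [sum_mul, mul_sum, mul_sum]
    refine sum_congr rfl fun r _ => ?_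
    simp only [← ee_add]
    congr 1; push_cast; ring
  rw [sum_congr rfl e, sum_comm]
  unfold TT
  rw [mul_sum, sum_filter]
  refine sum_congr rfl fun t ht => ?_
  simp only [mem_product] at ht
  have h1 := mem_primesUpTo_le ht.1
  have h2 := mem_primesUpTo_le ht.2.1
  have h3 := mem_primesUpTo_le ht.2.2
  rw [← mul_sum, ee_orth R (by omega) _ (by rw [abs_lt]; omega)]
  by_cases h : t.1 + t.2.1 + t.2.2 = N
  · rw [if_pos h, if_pos (by omega)]; ring
  · rw [if_neg h, if_neg (by omega), mul_zero]

lemma TT_bound (N : ℕ) (β1 β2 β3 δ : ℝ) (hδ : 0 ≤ δ)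
    (h : ∀ α, ‖Sp N (α + β1)‖ ≤ δ ∨ ‖Sp N (α + β2)‖ ≤ δ ∨ ‖Sp N (α + β3)‖ ≤ δ) :
    ‖TT N β1 β2 β3‖ ≤ 3 * δ * N := by
  have hT := TT_eq N (3 * N + 1) rfl β1 β2 β3
  set R := 3 * N + 1 with hR
  have hRpos : (0:ℝ) < R := by positivity
  have h1 := parseval_Sp N R (by omega) β1
  have h2 := parseval_Sp N R (by omega) β2
  have h3 := parseval_Sp N R (by omega) β3
  have hb : ‖(R:ℂ) * TT N β1 β2 β3‖ ≤ ∑ j ∈ range R, δ * (‖Sp N ((j:ℝ) / R + β1)‖ ^ 2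
      + ‖Sp N ((j:ℝ) / R + β2)‖ ^ 2 + ‖Sp N ((j:ℝ) / R + β3)‖ ^ 2) := by
    rw [hT]
    refine norm_sum_le_of_le _ fun j _ => ?_
    rw [norm_mul, norm_mul, norm_mul, norm_ee, mul_one]
    have h := h ((j:ℝ) / R)
    have a1 := norm_nonneg (Sp N ((j:ℝ) / R + β1))
    have a2 := norm_nonneg (Sp N ((j:ℝ) / R + β2))
    have a3 := norm_nonneg (Sp N ((j:ℝ) / R + β3))
    set x := ‖Sp N ((j:ℝ) / R + β1)‖
    set y := ‖Sp N ((j:ℝ) / R + β2)‖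
    set z := ‖Sp N ((j:ℝ) / R + β3)‖
    have k : ∀ u v w : ℝ, 0 ≤ u → 0 ≤ v → 0 ≤ w → u ≤ δ →
        u * (v * w) ≤ δ * (u ^ 2 + v ^ 2 + w ^ 2) := by
      intro u v w hu hv hw hd
      have s1 : u * (v * w) ≤ δ * (v * w) := by gcongr
      have s2 : v * w ≤ u ^ 2 + v ^ 2 + w ^ 2 := by nlinarith [sq_nonneg (v - w), sq_nonneg u]
      exact s1.trans (by gcongr)
    rcases h with h | h | h
    · linarith [k x y z a1 a2 a3 h]
    · linarith [k y x z a2 a1 a3 h]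
    · linarith [k z x y a3 a1 a2 h]
  rw [← mul_sum, sum_add_distrib, sum_add_distrib, h1, h2, h3, norm_mul] at hb
  simp only [Complex.norm_natCast] at hb
  have hc : ((primesUpTo N).card : ℝ) ≤ N := by exact_mod_cast card_primesUpTo N
  have : (R:ℝ) * ‖TT N β1 β2 β3‖ ≤ R * (3 * δ * N) := by
    refine hb.trans ?_
    calc δ * (R * (primesUpTo N).card + R * (primesUpTo N).card + R * (primesUpTo N).card)
        = R * (3 * δ * (primesUpTo N).card) := by ring
      _ ≤ _ := by gcongr
  exact le_of_mul_le_mul_left this hRpos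

lemma TT_off {η : ℝ} (hη : IsQuadraticIrrational η) (A B : ℕ) :
    ∃ K : ℝ, 0 < K ∧ ∀ N : ℕ, 2 ≤ N → ∀ m1 m2 m3 : ℤ, ¬ (m1 = m2 ∧ m2 = m3) →
      |(m1:ℝ)| ≤ (LL N : ℝ) ^ B → |(m2:ℝ)| ≤ (LL N : ℝ) ^ B → |(m3:ℝ)| ≤ (LL N : ℝ) ^ B →
      ‖TT N (m1 * η) (m2 * η) (m3 * η)‖ ≤ K * N ^ 2 / (LL N : ℝ) ^ A := by
  obtain ⟨K, hK, h⟩ := min_lemma hη A B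
  refine ⟨3 * K, by positivity, fun N hN m1 m2 m3 hne b1 b2 b3 => ?_⟩
  have := TT_bound N (m1 * η) (m2 * η) (m3 * η) (K * N / (LL N : ℝ) ^ A) (by positivity) ?_
  · refine this.trans (le_of_eq ?_); ring
  · intro α
    by_cases h12 : m1 = m2
    · have h23 : m3 - m2 ≠ 0 := by intro h; exact hne ⟨h12, by omega⟩
      have := h N hN (α + m2 * η) (m3 - m2) h23 (by
        push_cast; exact (abs_sub _ _).trans (by linarith))
      rcases this with h | h
      · exact Or.inr (Or.inl h)
      · refine Or.inr (Or.inr ?_)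
        convert h using 3; push_cast; ring
    · have := h N hN (α + m1 * η) (m2 - m1) (by omega) (by
        push_cast; exact (abs_sub _ _).trans (by linarith))
      rcases this with h | h
      · exact Or.inl h
      · refine Or.inr (Or.inl ?_)
        convert h using 3; push_cast; ring

lemma TT_diag (N : ℕ) (β : ℝ) : TT N β β β = I31 N * ee (β * N) := by
  unfold TT I31
  rw [card_eq_sum_ones]
  push_cast
  rw [sum_mul]
  refine sum_congr rfl fun t ht => ?_
  have h := (mem_filter.1 ht).2
  rw [← ee_add, ← ee_add, one_mul, ← h]
  congr 1; push_cast; ring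

lemma I31_le (N : ℕ) : I31 N ≤ N ^ 2 := by
  unfold I31
  have : ((primesUpTo N ×ˢ primesUpTo N ×ˢ primesUpTo N).filter
      (fun t => t.1 + t.2.1 + t.2.2 = N)).card ≤ (primesUpTo N ×ˢ primesUpTo N).card := by
    apply card_le_card_of_injOn (fun t => (t.1, t.2.1))
    · intro t ht
      simp only [coe_filter, mem_product, Set.mem_setOf_eq] at ht
      simp only [coe_product, Set.mem_prod, mem_coe]
      exact ⟨ht.1.1, ht.1.2.1⟩
    · rintro ⟨a, b, c⟩ h1 ⟨a', b', c'⟩ h2 heq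
      simp only [coe_filter, mem_product, Set.mem_setOf_eq] at h1 h2
      simp only [Prod.mk.injEq] at heq ⊢
      omega
  refine this.trans ?_
  rw [card_product, sq]
  exact Nat.mul_le_mul (card_primesUpTo N) (card_primesUpTo N)

/-- trapezoid function -/
noncomputable def trap (u v D x : ℝ) : ℝ :=
  (|Int.fract x - u| - |Int.fract x - (u + D)| - |Int.fract x - (v - D)| + |Int.fract x - v|)
    / (2 * D)

lemma trap_nonneg {u v D : ℝ} (hD : 0 < D) (h : u + D ≤ v - D) (x : ℝ) : 0 ≤ trap u v D x := by
  unfold trap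
  apply div_nonneg _ (by positivity)
  generalize Int.fract x = y
  rcases abs_cases (y - u) with h1 | h1 <;> rcases abs_cases (y - (u + D)) with h2 | h2 <;>
  rcases abs_cases (y - (v - D)) with h3 | h3 <;> rcases abs_cases (y - v) with h4 | h4 <;>
  linarith

lemma trap_le_one {u v D : ℝ} (hD : 0 < D) (h : u + D ≤ v - D) (x : ℝ) : trap u v D x ≤ 1 := by
  unfold trap
  rw [div_le_one (by positivity)]
  generalize Int.fract x = y
  rcases abs_cases (y - u) with h1 | h1 <;> rcases abs_cases (y - (u + D)) with h2 | h2 <;>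
  rcases abs_cases (y - (v - D)) with h3 | h3 <;> rcases abs_cases (y - v) with h4 | h4 <;>
  linarith

lemma trap_zero {u v D : ℝ} (hD : 0 < D) (h : u + D ≤ v - D) (x : ℝ)
    (hx : ¬ (u < Int.fract x ∧ Int.fract x < v)) : trap u v D x = 0 := by
  unfold trap
  generalize Int.fract x = y at *
  have : |y - u| - |y - (u + D)| - |y - (v - D)| + |y - v| = 0 := by
    by_cases hu : u < y
    · have hv : v ≤ y := by by_contra hh; exact hx ⟨hu, by linarith⟩
      rw [abs_of_nonneg, abs_of_nonneg, abs_of_nonneg, abs_of_nonneg] <;> linarith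
    · push Not at hu
      rw [abs_of_nonpos, abs_of_nonpos, abs_of_nonpos, abs_of_nonpos] <;> linarith
  rw [this, zero_div]

lemma trap_one {u v D : ℝ} (hD : 0 < D) (x : ℝ)
    (h1 : u + D ≤ Int.fract x) (h2 : Int.fract x ≤ v - D) : trap u v D x = 1 := by
  unfold trap
  generalize Int.fract x = y at *
  rw [div_eq_one_iff_eq (by positivity), abs_of_nonneg, abs_of_nonneg, abs_of_nonpos, abs_of_nonpos]
  all_goals linarith

/-- periodic Bernoulli polynomial -/
noncomputable def B2 (t : ℝ) : ℝ := Int.fract t ^ 2 - Int.fract t + 1 / 6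

lemma B2_shift {u : ℝ} (h0 : 0 ≤ u) (h1 : u < 1) (x : ℝ) :
    B2 (x - u) = (Int.fract x - u) ^ 2 - |Int.fract x - u| + 1 / 6 := by
  unfold B2
  have hf := Int.fract_nonneg x
  have hf1 := Int.fract_lt_one x
  have hx := Int.floor_add_fract x
  rcases le_or_gt u (Int.fract x) with h | h
  · have : Int.fract (x - u) = Int.fract x - u := by
      rw [Int.fract_eq_iff]
      exact ⟨by linarith, by linarith, ⌊x⌋, by linarith⟩
    rw [this, abs_of_nonneg (by linarith)]
  · have : Int.fract (x - u) = Int.fract x - u + 1 := by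
      rw [Int.fract_eq_iff]
      exact ⟨by linarith, by linarith, ⌊x⌋ - 1, by push_cast; linarith⟩
    rw [this, abs_of_neg (by linarith)]; ring

lemma trap_B2 {u v D : ℝ} (hD : 0 < D) (h : u + D ≤ v - D) (hu : 0 ≤ u) (hv : v < 1) (x : ℝ) :
    trap u v D x = (v - u - D) - (1 / (2 * D)) *
      (B2 (x - u) - B2 (x - (u + D)) - B2 (x - (v - D)) + B2 (x - v)) := by
  rw [B2_shift hu (by linarith), B2_shift (by linarith) (by linarith),
    B2_shift (by linarith) (by linarith), B2_shift (by linarith) hv]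
  unfold trap
  field_simp
  ring

lemma hasSum_B2 (x : ℝ) :
    HasSum (fun n : ℤ => 1 / (n:ℂ) ^ 2 * ee (n * x)) ((2 * Real.pi ^ 2 * B2 x : ℝ) : ℂ) := by
  have h := hasSum_one_div_pow_mul_fourier_mul_bernoulliFun (k := 2) le_rfl
    (x := Int.fract x) ⟨Int.fract_nonneg x, (Int.fract_lt_one x).le⟩
  have hb : bernoulliFun 2 (Int.fract x) = B2 x := by
    rw [bernoulliFun_two]; unfold B2; ring
  rw [hb] at h
  convert h using 1
  · funext n
    congr 1
    rw [fourier_coe_apply]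
    have : ee (n * x) = ee (n * Int.fract x) := by
      have := ee_add_int (n * Int.fract x) (n * ⌊x⌋)
      rw [← this]; congr 1
      push_cast
      conv_lhs => rw [← Int.floor_add_fract x]
      ring
    rw [this]; unfold ee; congr 1; push_cast; ring
  · push_cast
    rw [mul_pow, Complex.I_sq]
    have h2 : ((Nat.factorial 2 : ℕ) : ℂ) = 2 := by norm_num [Nat.factorial]
    rw [h2]
    ring

/-- Fourier coefficients of the trapezoid -/
noncomputable def cf (u v D : ℝ) (m : ℤ) : ℂ :=
  if m = 0 then ((v - u - D : ℝ) : ℂ) else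
    -(1 / (4 * Real.pi ^ 2 * m ^ 2 * D)) * (ee (-(m * u)) - ee (-(m * (u + D)))
      - ee (-(m * (v - D))) + ee (-(m * v)))

lemma hasSum_trap {u v D : ℝ} (hD : 0 < D) (h : u + D ≤ v - D) (hu : 0 ≤ u) (hv : v < 1) (x : ℝ) :
    HasSum (fun m : ℤ => cf u v D m * ee (m * x)) ((trap u v D x : ℝ) : ℂ) := by
  have h0 : HasSum (fun m : ℤ => if m = 0 then ((v - u - D : ℝ) : ℂ) else 0)
      ((v - u - D : ℝ) : ℂ) := hasSum_ite_eq 0 _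
  have h1 := (((hasSum_B2 (x - u)).sub (hasSum_B2 (x - (u + D)))).sub
    (hasSum_B2 (x - (v - D)))).add (hasSum_B2 (x - v))
  have h2 := h0.sub (h1.mul_left (1 / (4 * Real.pi ^ 2 * D) : ℂ))
  have hD' : (D:ℂ) ≠ 0 := by exact_mod_cast hD.ne'
  have hpi : (Real.pi : ℂ) ≠ 0 := by exact_mod_cast Real.pi_ne_zero
  have e1 : (fun m : ℤ => cf u v D m * ee (m * x)) = fun m : ℤ =>
      (if m = 0 then ((v - u - D : ℝ) : ℂ) else 0) - 1 / (4 * Real.pi ^ 2 * D) *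
        (1 / (m:ℂ) ^ 2 * ee (m * (x - u)) - 1 / (m:ℂ) ^ 2 * ee (m * (x - (u + D)))
          - 1 / (m:ℂ) ^ 2 * ee (m * (x - (v - D))) + 1 / (m:ℂ) ^ 2 * ee (m * (x - v))) := by
    funext m
    unfold cf
    by_cases hm : m = 0
    · subst hm; simp [ee_zero]
    · have hm' : (m:ℂ) ≠ 0 := by exact_mod_cast hm
      rw [if_neg hm, if_neg hm]
      have e : ∀ w : ℝ, ee (m * (x - w)) = ee (-(m * w)) * ee (m * x) := by
        intro w; rw [← ee_add]; congr 1; ring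
      simp only [e]
      field_simp
      ring
  rw [e1, trap_B2 hD h hu hv]
  have e2 : (((v - u - D) - (1 / (2 * D)) *
      (B2 (x - u) - B2 (x - (u + D)) - B2 (x - (v - D)) + B2 (x - v)) : ℝ) : ℂ) =
      ((v - u - D : ℝ) : ℂ) - 1 / (4 * Real.pi ^ 2 * D) * (((2 * Real.pi ^ 2 * B2 (x - u) : ℝ) : ℂ)
      - ((2 * Real.pi ^ 2 * B2 (x - (u + D)) : ℝ) : ℂ)
      - ((2 * Real.pi ^ 2 * B2 (x - (v - D)) : ℝ) : ℂ)
      + ((2 * Real.pi ^ 2 * B2 (x - v) : ℝ) : ℂ)) := by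
    push_cast
    field_simp
    ring
  rw [e2]; exact h2

lemma ee_sub_one_le (t : ℝ) : ‖ee t - 1‖ ≤ 2 * Real.pi * |t| := by
  rw [ee_eq, Complex.norm_exp_I_mul_ofReal_sub_one]
  have h := Real.abs_sin_le_abs (x := 2 * Real.pi * t / 2)
  have e : |2 * Real.pi * t / 2| = Real.pi * |t| := by
    rw [show 2 * Real.pi * t / 2 = Real.pi * t by ring, abs_mul, abs_of_pos Real.pi_pos]
  rw [norm_mul, Real.norm_eq_abs, Real.norm_eq_abs, abs_two]
  linarith

lemma ee_taylor (t : ℝ) : ‖ee t - 1 - 2 * Real.pi * Complex.I * t‖ ≤ 3 * (2 * Real.pi * t) ^ 2 := by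
  have hz : ‖2 * Real.pi * Complex.I * (t:ℂ)‖ = |2 * Real.pi * t| := by
    simp [abs_mul, abs_of_pos Real.pi_pos]
  rcases le_or_gt |2 * Real.pi * t| 1 with h | h
  · unfold ee
    have := Complex.norm_exp_sub_one_sub_id_le (x := 2 * Real.pi * Complex.I * (t:ℂ)) (by rw [hz]; exact h)
    rw [hz, sq_abs] at this
    nlinarith [sq_nonneg (2 * Real.pi * t)]
  · have h1 := norm_sub_le (ee t - 1) (2 * Real.pi * Complex.I * t)
    have h2 := norm_sub_le (ee t) 1
    rw [norm_ee, norm_one] at h2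
    rw [hz] at h1
    have h3 := sq_abs (2 * Real.pi * t)
    nlinarith

/-- Fourier coefficients of the indicator of `(a,b)`. -/
noncomputable def cs (a b : ℝ) (m : ℤ) : ℂ :=
  if m = 0 then ((b - a : ℝ) : ℂ) else
    (ee (-(m * a)) - ee (-(m * b))) / (2 * Real.pi * Complex.I * m)

lemma norm_cs_le {a b : ℝ} {m : ℤ} (hm : m ≠ 0) : ‖cs a b m‖ ≤ 1 / |(m:ℝ)| := by
  unfold cs
  have hm' : 0 < |(m:ℝ)| := abs_pos.2 (by exact_mod_cast hm)
  have hpi := Real.pi_gt_three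
  rw [if_neg hm, norm_div]
  have e : ‖2 * Real.pi * Complex.I * (m:ℂ)‖ = 2 * Real.pi * |(m:ℝ)| := by
    simp [abs_of_pos Real.pi_pos]
  rw [e, div_le_div_iff₀ (by positivity) hm']
  have h2 := norm_sub_le (ee (-(m * a))) (ee (-(m * b)))
  rw [norm_ee, norm_ee] at h2
  nlinarith

lemma norm_pref (m : ℤ) (D : ℝ) (hD : 0 < D) :
    ‖-(1 / (4 * Real.pi ^ 2 * (m:ℂ) ^ 2 * D))‖ = 1 / (4 * Real.pi ^ 2 * (m:ℝ) ^ 2 * D) := by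
  simp [abs_of_pos Real.pi_pos, abs_of_pos hD]

lemma norm_cf_le1 {u v D : ℝ} (hD : 0 < D) {m : ℤ} (hm : m ≠ 0) :
    ‖cf u v D m‖ ≤ 1 / D * (1 / (m:ℝ) ^ 2) := by
  unfold cf
  have hm' : 0 < (m:ℝ)^2 := by
    have : (m:ℝ) ≠ 0 := by exact_mod_cast hm
    positivity
  have hpi := Real.pi_gt_three
  rw [if_neg hm, norm_mul, norm_pref m D hD]
  have h2 : ‖ee (-(m * u)) - ee (-(m * (u + D))) - ee (-(m * (v - D))) + ee (-(m * v))‖ ≤ 4 := by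
    have h1 := norm_add_le (ee (-(m * u)) - ee (-(m * (u + D))) - ee (-(m * (v - D)))) (ee (-(m * v)))
    have h2 := norm_sub_le (ee (-(m * u)) - ee (-(m * (u + D)))) (ee (-(m * (v - D))))
    have h3 := norm_sub_le (ee (-(m * u))) (ee (-(m * (u + D))))
    simp only [norm_ee] at h1 h2 h3
    linarith
  calc _ ≤ 1 / (4 * Real.pi ^ 2 * (m:ℝ) ^ 2 * D) * 4 := by gcongr
    _ = 1 / D * (1 / (m:ℝ) ^ 2) * (1 / Real.pi ^ 2) := by field_simp
    _ ≤ 1 / D * (1 / (m:ℝ) ^ 2) * 1 := by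
        gcongr
        rw [div_le_one (by positivity)]; nlinarith
    _ = _ := by ring

lemma norm_cf_le2 {u v D : ℝ} (hD : 0 < D) {m : ℤ} (hm : m ≠ 0) :
    ‖cf u v D m‖ ≤ 1 / |(m:ℝ)| := by
  unfold cf
  have hm' : 0 < |(m:ℝ)| := abs_pos.2 (by exact_mod_cast hm)
  have hpi := Real.pi_gt_three
  rw [if_neg hm, norm_mul, norm_pref m D hD]
  have h2 : ‖ee (-(m * u)) - ee (-(m * (u + D))) - ee (-(m * (v - D))) + ee (-(m * v))‖
      ≤ 4 * Real.pi * |(m:ℝ)| * D := by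
    have e : ee (-(m * u)) - ee (-(m * (u + D))) - ee (-(m * (v - D))) + ee (-(m * v))
      = -(ee (-(m * u)) * (ee (-(m * D)) - 1)) + ee (-(m * (v - D))) * (ee (-(m * D)) - 1) := by
      have e1 : ee (-(m * (u + D))) = ee (-(m * u)) * ee (-(m * D)) := by
        rw [← ee_add]; congr 1; ring
      have e2 : ee (-(m * v)) = ee (-(m * (v - D))) * ee (-(m * D)) := by
        rw [← ee_add]; congr 1; ring
      rw [e1, e2]; ring
    rw [e]
    have h := ee_sub_one_le (-(m * D))
    rw [abs_neg, abs_mul, abs_of_pos hD] at h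
    refine (norm_add_le _ _).trans ?_
    rw [norm_neg, norm_mul, norm_mul, norm_ee, norm_ee]
    linarith
  calc _ ≤ 1 / (4 * Real.pi ^ 2 * (m:ℝ) ^ 2 * D) * (4 * Real.pi * |(m:ℝ)| * D) := by gcongr
    _ = 1 / |(m:ℝ)| * (1 / Real.pi) := by
        rw [← sq_abs (m:ℝ)]; field_simp
    _ ≤ 1 / |(m:ℝ)| * 1 := by
        gcongr
        rw [div_le_one (by positivity)]; linarith
    _ = _ := by ring

lemma avg_lemma {a u D : ℝ} (h : u = a ∨ u + D = a) (m : ℤ) :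
    ‖ee (-(m * u)) - ee (-(m * (u + D))) - 2 * Real.pi * Complex.I * m * D * ee (-(m * a))‖
      ≤ 3 * (2 * Real.pi * (m * D)) ^ 2 := by
  rcases h with h | h
  · have e : ee (-(m * u)) - ee (-(m * (u + D))) - 2 * Real.pi * Complex.I * m * D * ee (-(m * a))
        = -(ee (-(m * a)) * (ee (-(m * D)) - 1 - 2 * Real.pi * Complex.I * ((-(m * D) : ℝ) : ℂ))) := by
      have e1 : ee (-(m * (u + D))) = ee (-(m * a)) * ee (-(m * D)) := by
        rw [← ee_add]; congr 1; rw [h]; ring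
      rw [e1, h]; push_cast; ring
    rw [e, norm_neg, norm_mul, norm_ee, one_mul]
    refine (ee_taylor _).trans (le_of_eq ?_); ring
  · have e : ee (-(m * u)) - ee (-(m * (u + D))) - 2 * Real.pi * Complex.I * m * D * ee (-(m * a))
        = ee (-(m * a)) * (ee (m * D) - 1 - 2 * Real.pi * Complex.I * ((m * D : ℝ) : ℂ)) := by
      have e1 : ee (-(m * u)) = ee (-(m * a)) * ee (m * D) := by
        rw [← ee_add]; congr 1; rw [← h]; ring
      rw [e1, h]; push_cast; ring
    rw [e, norm_mul, norm_ee, one_mul]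
    exact ee_taylor _

lemma cf_sub_cs {a b u v D : ℝ} (hD : 0 < D) (hu : u = a ∨ u + D = a) (hv : v - D = b ∨ v = b)
    (m : ℤ) : ‖cf u v D m - cs a b m‖ ≤ 6 * D := by
  by_cases hm : m = 0
  · subst hm
    simp only [cf, cs, if_true]
    rw [← Complex.ofReal_sub, Complex.norm_real, Real.norm_eq_abs, abs_le]
    rcases hu with h | h <;> rcases hv with h' | h' <;> constructor <;> linarith
  have h1 := avg_lemma hu m
  have h2 := avg_lemma (a := b) (u := v - D) (D := D) (by rcases hv with h | h <;> [left; right] <;> linarith) m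
  rw [sub_add_cancel] at h2
  have hm0 : (m:ℂ) ≠ 0 := by exact_mod_cast hm
  have hm0' : (m:ℝ) ≠ 0 := by exact_mod_cast hm
  have hD' : (D:ℂ) ≠ 0 := by exact_mod_cast hD.ne'
  have hpi : (Real.pi : ℂ) ≠ 0 := by exact_mod_cast Real.pi_ne_zero
  have e : cf u v D m - cs a b m = -(1 / (4 * Real.pi ^ 2 * (m:ℂ) ^ 2 * D)) *
      ((ee (-(m * u)) - ee (-(m * (u + D))) - 2 * Real.pi * Complex.I * m * D * ee (-(m * a)))
      - (ee (-(m * (v - D))) - ee (-(m * v)) - 2 * Real.pi * Complex.I * m * D * ee (-(m * b)))) := by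
    unfold cf cs
    rw [if_neg hm, if_neg hm]
    have hI : (1 : ℂ) / (2 * Real.pi * Complex.I * m) = -(1 / (4 * Real.pi ^ 2 * (m:ℂ) ^ 2 * D))
        * (2 * Real.pi * Complex.I * m * D) := by
      have := Complex.I_sq
      field_simp
      rw [this]; ring
    rw [div_eq_mul_one_div _ (2 * Real.pi * Complex.I * (m:ℂ)), hI]
    ring
  rw [e, norm_mul, norm_pref m D hD]
  have h3 := (norm_sub_le _ _).trans (add_le_add h1 h2)
  calc _ ≤ 1 / (4 * Real.pi ^ 2 * (m:ℝ) ^ 2 * D) *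
        (3 * (2 * Real.pi * (m * D)) ^ 2 + 3 * (2 * Real.pi * (m * D)) ^ 2) := by gcongr
    _ = 6 * D := by field_simp; ring

lemma sigmaTerm_eq (η a b : ℝ) (N : ℕ) (m : ℤ) :
    sigmaTerm η a b N m = cs a b m ^ 3 * ee (m * η * N) := by
  unfold sigmaTerm cs
  by_cases hm : m = 0
  · subst hm; simp [ee_zero]
  rw [if_neg hm, if_neg hm]
  have hm0 : (m:ℂ) ≠ 0 := by exact_mod_cast hm
  have hpi : (Real.pi : ℂ) ≠ 0 := by exact_mod_cast Real.pi_ne_zero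
  have e1 : ee (-(m * a)) = ee (-(m * (a + b) / 2)) * Complex.exp (Real.pi * m * (b - a) * Complex.I) := by
    unfold ee; rw [← Complex.exp_add]; congr 1; push_cast; ring
  have e2 : ee (-(m * b)) = ee (-(m * (a + b) / 2)) * Complex.exp (-(Real.pi * m * (b - a)) * Complex.I) := by
    unfold ee; rw [← Complex.exp_add]; congr 1; push_cast; ring
  have e3 : (ee (-(m * a)) - ee (-(m * b))) = ee (-(m * (a + b) / 2)) *
      (2 * Complex.I * Complex.sin (Real.pi * m * (b - a))) := by
    rw [e1, e2, Complex.sin]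
    linear_combination (ee (-(m * (a + b) / 2))) * (Complex.exp (Real.pi * m * (b - a) * Complex.I)
      - Complex.exp (-(Real.pi * m * (b - a)) * Complex.I)) * Complex.I_sq
  have e4 : Complex.exp (2 * Real.pi * Complex.I * m * (η * N - 1.5 * (a + b)))
      = ee (-(m * (a + b) / 2)) ^ 3 * ee (m * η * N) := by
    rw [← ee_nat_mul, ← ee_add]; unfold ee; congr 1; push_cast; ring
  rw [e3, e4]
  push_cast
  field_simp

/-- Majorant weight `min(1, 1/m²)`. -/
noncomputable def ww (m : ℤ) : ℝ := if m = 0 then 1 else 1 / (m:ℝ) ^ 2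

lemma ww_nonneg (m : ℤ) : 0 ≤ ww m := by unfold ww; split_ifs <;> positivity

lemma summable_ww : Summable ww := by
  have h1 : Summable (fun m : ℤ => 1 / (m:ℝ) ^ 2) :=
    Real.summable_one_div_int_pow.2 (by norm_num)
  have h2 : Summable (fun m : ℤ => if m = 0 then (1:ℝ) else 0) := (hasSum_ite_eq 0 1).summable
  refine (h1.add h2).congr fun m => ?_
  unfold ww
  by_cases hm : m = 0
  · simp [hm]
  · simp [hm]

/-- The symmetric interval. -/
noncomputable def SS (Q : ℕ) : Finset ℤ := Finset.Icc (-((Q:ℤ) ^ 2)) ((Q:ℤ) ^ 2)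

lemma mem_SS {Q : ℕ} {m : ℤ} : m ∈ SS Q ↔ |m| ≤ (Q:ℤ) ^ 2 := by
  unfold SS; rw [Finset.mem_Icc, abs_le]

lemma card_SS {Q : ℕ} (hQ : 1 ≤ Q) : ((SS Q).card : ℝ) ≤ 3 * (Q:ℝ) ^ 2 := by
  unfold SS
  rw [Int.card_Icc]
  have h : ((Q:ℤ) ^ 2 + 1 - -((Q:ℤ) ^ 2)).toNat = 2 * Q ^ 2 + 1 := by
    have : (Q:ℤ) ^ 2 + 1 - -((Q:ℤ) ^ 2) = ((2 * Q ^ 2 + 1 : ℕ) : ℤ) := by push_cast; ring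
    rw [this, Int.toNat_natCast]
  rw [h]; push_cast
  have : (1:ℝ) ≤ Q := by exact_mod_cast hQ
  nlinarith

lemma hasSum_restrict (S : Finset ℤ) (f : ℤ → ℂ) :
    HasSum (fun m => if m ∈ S then f m else 0) (∑ m ∈ S, f m) := by
  have h : HasSum (fun m => if m ∈ S then f m else 0) (∑ m ∈ S, if m ∈ S then f m else 0) :=
    hasSum_sum_of_ne_finset_zero (by intro m hm; simp [hm])
  have e : ∑ m ∈ S, (if m ∈ S then f m else 0) = ∑ m ∈ S, f m :=
    sum_congr rfl fun m hm => by simp [hm]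
  rw [e] at h
  exact h

lemma tail_lemma : ∃ Z : ℝ, 0 < Z ∧ ∀ (f : ℤ → ℂ) (s : ℂ) (D : ℝ) (Q : ℕ), 1 ≤ Q → HasSum f s →
    0 ≤ D → (∀ m : ℤ, m ≠ 0 → ‖f m‖ ≤ D * (1 / (m:ℝ) ^ 2)) →
    ‖s - ∑ m ∈ SS Q, f m‖ ≤ D * Z / Q := by
  have hsum : Summable (fun m : ℤ => |(m:ℝ)| ^ (-(3/2) : ℝ)) :=
    Real.summable_abs_int_rpow (by norm_num)
  set Z0 := ∑' m : ℤ, |(m:ℝ)| ^ (-(3/2) : ℝ) with hZ0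
  have hZ0n : 0 ≤ Z0 := tsum_nonneg fun m => by positivity
  refine ⟨Z0 + 1, by linarith, fun f s D Q hQ hf hD hb => ?_⟩
  have hQ' : (1:ℝ) ≤ Q := by exact_mod_cast hQ
  have h1 : HasSum (fun m => if m ∈ SS Q then f m else 0) (∑ m ∈ SS Q, f m) := by
    exact hasSum_restrict (SS Q) f
  have h2 := hf.sub h1
  have h3 : HasSum (fun m : ℤ => D / Q * |(m:ℝ)| ^ (-(3/2) : ℝ)) (D / Q * Z0) :=
    hsum.hasSum.mul_left _
  have h4 := tsum_of_norm_bounded h3 (f := fun m => f m - if m ∈ SS Q then f m else 0) (by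
    intro m
    by_cases hm : m ∈ SS Q
    · simp only [hm, if_true, sub_self, norm_zero]; positivity
    · simp only [hm, if_false, sub_zero]
      rw [mem_SS, not_le] at hm
      have hm0 : m ≠ 0 := by rintro rfl; simp at hm; nlinarith [sq_nonneg (Q:ℤ)]
      refine (hb m hm0).trans ?_
      have hx : (Q:ℝ) ^ 2 < |(m:ℝ)| := by exact_mod_cast hm
      have hx0 : 0 < |(m:ℝ)| := by positivity
      have hs : (Q:ℝ) ≤ |(m:ℝ)| ^ (1/2 : ℝ) := by
        rw [← Real.sqrt_eq_rpow]
        exact Real.le_sqrt_of_sq_le hx.le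
      have he : 1 / (m:ℝ) ^ 2 = |(m:ℝ)| ^ (-(3/2) : ℝ) * (|(m:ℝ)| ^ (1/2 : ℝ))⁻¹ := by
        rw [← Real.rpow_neg hx0.le, ← Real.rpow_add hx0, ← sq_abs]
        norm_num
      rw [he]
      have hq : (|(m:ℝ)| ^ (1/2 : ℝ))⁻¹ ≤ (Q:ℝ)⁻¹ := inv_anti₀ (by linarith) hs
      calc D * (|(m:ℝ)| ^ (-(3/2) : ℝ) * (|(m:ℝ)| ^ (1/2 : ℝ))⁻¹)
          ≤ D * (|(m:ℝ)| ^ (-(3/2) : ℝ) * (Q:ℝ)⁻¹) := by gcongr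
        _ = _ := by ring)
  rw [h2.tsum_eq] at h4
  refine h4.trans ?_
  rw [div_mul_eq_mul_div]
  gcongr
  linarith

lemma expand_TT (N : ℕ) (η : ℝ) (S : Finset ℤ) (c : ℤ → ℂ) :
    ∑ t ∈ (primesUpTo N ×ˢ primesUpTo N ×ˢ primesUpTo N).filter
        (fun t => t.1 + t.2.1 + t.2.2 = N),
      (∑ m ∈ S, c m * ee (m * (η * t.1))) * (∑ m ∈ S, c m * ee (m * (η * t.2.1)))
        * (∑ m ∈ S, c m * ee (m * (η * t.2.2)))
    = ∑ m1 ∈ S, ∑ m2 ∈ S, ∑ m3 ∈ S, c m1 * c m2 * c m3 * TT N (m1 * η) (m2 * η) (m3 * η) := by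
  have e : ∀ t : ℕ × ℕ × ℕ, (∑ m ∈ S, c m * ee (m * (η * t.1)))
      * (∑ m ∈ S, c m * ee (m * (η * t.2.1))) * (∑ m ∈ S, c m * ee (m * (η * t.2.2)))
      = ∑ m1 ∈ S, ∑ m2 ∈ S, ∑ m3 ∈ S, c m1 * c m2 * c m3 *
        (ee (m1 * η * t.1) * ee (m2 * η * t.2.1) * ee (m3 * η * t.2.2)) := by
    intro t
    rw [sum_mul_sum, sum_mul]
    refine sum_congr rfl fun m1 _ => ?_
    rw [sum_mul]
    refine sum_congr rfl fun m2 _ => ?_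
    rw [mul_sum]
    refine sum_congr rfl fun m3 _ => ?_
    simp only [mul_assoc]
    ring
  rw [sum_congr rfl fun t _ => e t, sum_comm]
  refine sum_congr rfl fun m1 _ => ?_
  rw [sum_comm]
  refine sum_congr rfl fun m2 _ => ?_
  rw [sum_comm]
  refine sum_congr rfl fun m3 _ => ?_
  unfold TT
  rw [mul_sum]

lemma diag_lemma (S : Finset ℤ) (F : ℤ → ℤ → ℤ → ℂ) (X : ℝ)
    (h : ∀ m1 ∈ S, ∀ m2 ∈ S, ∀ m3 ∈ S, ¬ (m1 = m2 ∧ m2 = m3) → ‖F m1 m2 m3‖ ≤ X) (hX : 0 ≤ X) :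
    ‖∑ m1 ∈ S, ∑ m2 ∈ S, ∑ m3 ∈ S, F m1 m2 m3 - ∑ m ∈ S, F m m m‖ ≤ (S.card : ℝ) ^ 3 * X := by
  have e : ∑ m ∈ S, F m m m = ∑ m1 ∈ S, ∑ m2 ∈ S, ∑ m3 ∈ S,
      if m1 = m2 ∧ m2 = m3 then F m1 m2 m3 else 0 := by
    refine sum_congr rfl fun m1 h1 => ?_
    simp only [ite_and]
    have : ∀ m2 ∈ S, (∑ m3 ∈ S, if m1 = m2 then (if m2 = m3 then F m1 m2 m3 else 0) else 0)
        = if m1 = m2 then F m1 m2 m2 else 0 := by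
      intro m2 h2
      split_ifs with hh
      · rw [sum_ite_eq]; simp [h2]
      · simp
    rw [sum_congr rfl this, sum_ite_eq]; simp [h1]
  rw [e, ← sum_sub_distrib]
  simp only [← sum_sub_distrib]
  have hh : ∀ m1 ∈ S, ∀ m2 ∈ S, ∀ m3 ∈ S,
      ‖F m1 m2 m3 - (if m1 = m2 ∧ m2 = m3 then F m1 m2 m3 else 0)‖ ≤ X := by
    intro m1 h1 m2 h2 m3 h3
    split_ifs with hc
    · simpa using hX
    · rw [sub_zero]; exact h m1 h1 m2 h2 m3 h3 hc
  calc _ ≤ ∑ m1 ∈ S, ∑ m2 ∈ S, ∑ m3 ∈ S, X :=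
        norm_sum_le_of_le _ fun m1 h1 => norm_sum_le_of_le _ fun m2 h2 =>
          norm_sum_le_of_le _ fun m3 h3 => hh m1 h1 m2 h2 m3 h3
    _ = _ := by simp; ring

lemma prod3_diff {g1 g2 g3 h1 h2 h3 : ℂ} {ε E : ℝ} (hεE : ε ≤ E) (hε : 0 ≤ ε)
    (a1 : ‖g1‖ ≤ 1) (a2 : ‖g2‖ ≤ 1) (a3 : ‖g3‖ ≤ 1)
    (d1 : ‖g1 - h1‖ ≤ ε) (d2 : ‖g2 - h2‖ ≤ ε) (d3 : ‖g3 - h3‖ ≤ ε) :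
    ‖g1 * g2 * g3 - h1 * h2 * h3‖ ≤ ε * (1 + (1 + E) + (1 + E) ^ 2) := by
  have b : ∀ g h : ℂ, ‖g‖ ≤ 1 → ‖g - h‖ ≤ ε → ‖h‖ ≤ 1 + E := by
    intro g h hg hd
    have := norm_sub_le g (g - h)
    rw [sub_sub_cancel] at this
    linarith
  have b1 := b _ _ a1 d1
  have b2 := b _ _ a2 d2
  have e : g1 * g2 * g3 - h1 * h2 * h3 = (g1 - h1) * g2 * g3 + h1 * (g2 - h2) * g3
      + h1 * h2 * (g3 - h3) := by ring
  rw [e]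
  have hE : 0 ≤ E := hε.trans hεE
  have t1 : ‖(g1 - h1) * g2 * g3‖ ≤ ε * 1 * 1 := by rw [norm_mul, norm_mul]; gcongr
  have t2 : ‖h1 * (g2 - h2) * g3‖ ≤ (1 + E) * ε * 1 := by rw [norm_mul, norm_mul]; gcongr
  have t3 : ‖h1 * h2 * (g3 - h3)‖ ≤ (1 + E) * (1 + E) * ε := by rw [norm_mul, norm_mul]; gcongr
  calc _ ≤ _ := norm_add₃_le
    _ ≤ ε * 1 * 1 + (1 + E) * ε * 1 + (1 + E) * (1 + E) * ε := by linarith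
    _ = _ := by ring

lemma cube_diff {x y : ℂ} {B d : ℝ} (hx : ‖x‖ ≤ B) (hy : ‖y‖ ≤ B) (hd : ‖x - y‖ ≤ d) (hB : 0 ≤ B) :
    ‖x ^ 3 - y ^ 3‖ ≤ 3 * d * B ^ 2 := by
  have e : x ^ 3 - y ^ 3 = (x - y) * (x * x + x * y + y * y) := by ring
  have h : ‖x * x + x * y + y * y‖ ≤ 3 * B ^ 2 := by
    have t1 : ‖x * x‖ ≤ B * B := by rw [norm_mul]; gcongr
    have t2 : ‖x * y‖ ≤ B * B := by rw [norm_mul]; gcongr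
    have t3 : ‖y * y‖ ≤ B * B := by rw [norm_mul]; gcongr
    calc _ ≤ _ := norm_add₃_le
      _ ≤ _ := by nlinarith
  rw [e, norm_mul]
  have : 0 ≤ d := (norm_nonneg _).trans hd
  calc _ ≤ d * (3 * B ^ 2) := by gcongr
    _ = _ := by ring

lemma sigma_cmp {η a b u v D : ℝ} (hD : 0 < D) (hab : 0 ≤ b - a) (hab1 : b - a ≤ 1)
    (hu : u = a ∨ u + D = a) (hv : v - D = b ∨ v = b)
    (h0 : 0 ≤ v - u - D) (h1 : v - u - D ≤ 1) (N Q : ℕ) (hQ : 1 ≤ Q) :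
    ‖∑ m ∈ SS Q, cf u v D m ^ 3 * ee (m * η * N) - sigmaSeries η a b N‖
      ≤ (18 * D + 1 / (Q:ℝ) ^ 2) * ∑' m, ww m := by
  have hQ' : (1:ℝ) ≤ Q := by exact_mod_cast hQ
  have csb : ∀ m : ℤ, ‖cs a b m‖ ≤ if m = 0 then 1 else 1 / |(m:ℝ)| := by
    intro m
    split_ifs with hm
    · subst hm; simp only [cs, if_true]
      rw [Complex.norm_real, Real.norm_eq_abs, abs_of_nonneg hab]; exact hab1
    · exact norm_cs_le hm
  have cfb : ∀ m : ℤ, ‖cf u v D m‖ ≤ if m = 0 then 1 else 1 / |(m:ℝ)| := by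
    intro m
    split_ifs with hm
    · subst hm; simp only [cf, if_true]
      rw [Complex.norm_real, Real.norm_eq_abs, abs_of_nonneg h0]; exact h1
    · exact norm_cf_le2 hD hm
  have wsq : ∀ m : ℤ, (if m = 0 then (1:ℝ) else 1 / |(m:ℝ)|) ^ 2 = ww m := by
    intro m; unfold ww; split_ifs
    · norm_num
    · rw [div_pow, sq_abs]; norm_num
  have wle : ∀ m : ℤ, (if m = 0 then (1:ℝ) else 1 / |(m:ℝ)|) ≤ 1 := by
    intro m; split_ifs with hm
    · exact le_rfl
    · have : 1 ≤ |(m:ℝ)| := by exact_mod_cast Int.one_le_abs hm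
      rw [div_le_one (by linarith)]; exact this
  have wnn : ∀ m : ℤ, 0 ≤ (if m = 0 then (1:ℝ) else 1 / |(m:ℝ)|) := by
    intro m; split_ifs <;> positivity
  have cs3 : ∀ m : ℤ, ‖cs a b m ^ 3‖ ≤ ww m * (if m = 0 then (1:ℝ) else 1 / |(m:ℝ)|) := by
    intro m
    rw [norm_pow, ← wsq m, ← pow_succ]
    exact pow_le_pow_left₀ (norm_nonneg _) (csb m) 3
  have sm : Summable (fun m : ℤ => sigmaTerm η a b N m) := by
    refine Summable.of_norm_bounded summable_ww fun m => ?_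
    rw [sigmaTerm_eq, norm_mul, norm_ee, mul_one]
    refine (cs3 m).trans ?_
    exact mul_le_of_le_one_right (ww_nonneg m) (wle m)
  have h1 : HasSum (fun m => if m ∈ SS Q then cf u v D m ^ 3 * ee (m * η * N) else 0)
      (∑ m ∈ SS Q, cf u v D m ^ 3 * ee (m * η * N)) := by
    exact hasSum_restrict (SS Q) (fun m => cf u v D m ^ 3 * ee (m * η * N))
  have h2 := h1.sub sm.hasSum
  have h3 := summable_ww.hasSum.mul_left (18 * D + 1 / (Q:ℝ) ^ 2)
  have h4 := tsum_of_norm_bounded h3 (f := fun m =>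
      (if m ∈ SS Q then cf u v D m ^ 3 * ee (m * η * N) else 0) - sigmaTerm η a b N m) (by
    intro m
    have hw := ww_nonneg m
    by_cases hm : m ∈ SS Q
    · simp only [hm, if_true]
      rw [sigmaTerm_eq, ← sub_mul, norm_mul, norm_ee, mul_one]
      have := cube_diff (cfb m) (csb m) (cf_sub_cs hD hu hv m) (wnn m)
      rw [wsq] at this
      have hq : 0 ≤ 1 / (Q:ℝ) ^ 2 := by positivity
      nlinarith
    · simp only [hm, if_false, zero_sub, norm_neg]
      rw [sigmaTerm_eq, norm_mul, norm_ee, mul_one]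
      refine (cs3 m).trans ?_
      rw [mem_SS, not_le] at hm
      have hm0 : m ≠ 0 := by rintro rfl; simp at hm; nlinarith [sq_nonneg (Q:ℤ)]
      have hx : (Q:ℝ) ^ 2 < |(m:ℝ)| := by exact_mod_cast hm
      rw [if_neg hm0, mul_comm]
      gcongr
      have : 1 / |(m:ℝ)| ≤ 1 / (Q:ℝ) ^ 2 := one_div_le_one_div_of_le (by positivity) hx.le
      linarith)
  rw [h2.tsum_eq] at h4
  exact h4

noncomputable def Tri (N : ℕ) : Finset (ℕ × ℕ × ℕ) :=
  (primesUpTo N ×ˢ primesUpTo N ×ˢ primesUpTo N).filter (fun t => t.1 + t.2.1 + t.2.2 = N)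

lemma card_Tri (N : ℕ) : (Tri N).card = I31 N := rfl

noncomputable def Jt (η u v D : ℝ) (N : ℕ) : ℝ :=
  ∑ t ∈ Tri N, trap u v D (η * t.1) * trap u v D (η * t.2.1) * trap u v D (η * t.2.2)

lemma smooth_est {η : ℝ} (hη : IsQuadraticIrrational η) {a b : ℝ} (hab : 0 ≤ b - a)
    (hab1 : b - a ≤ 1) (c : ℕ) {D0 : ℝ} (hD0 : 0 < D0) :
    ∃ K : ℝ, 0 < K ∧ ∀ N : ℕ, 2 ≤ N → ∀ u v D : ℝ, D = D0 / (LL N : ℝ) ^ c →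
      (u = a ∨ u + D = a) → (v - D = b ∨ v = b) → u + D ≤ v - D → 0 ≤ u → v < 1 →
      ‖((Jt η u v D N : ℝ) : ℂ) - I31 N * sigmaSeries η a b N‖ ≤ K * (N:ℝ) ^ 2 / (LL N : ℝ) ^ c := by
  obtain ⟨Z, hZ, tail⟩ := tail_lemma
  obtain ⟨K1, hK1, off⟩ := TT_off hη (13 * c) (4 * c)
  set W := ∑' m, ww m with hW
  have hW0 : 0 ≤ W := tsum_nonneg ww_nonneg
  set E := Z / D0 with hE
  have hE0 : 0 ≤ E := by positivity
  refine ⟨E * (1 + (1 + E) + (1 + E) ^ 2) + 27 * K1 + (18 * D0 + 1) * W, by positivity, ?_⟩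
  intro N hN u v D hDdef hu hv huv hu0 hv1
  have hL1 := LL_one (N := N) (by omega)
  have hL1' : (1:ℝ) ≤ LL N := by exact_mod_cast hL1
  set L : ℝ := (LL N : ℝ) with hL
  have hL0 : 0 < L := by linarith
  have hLc : 1 ≤ L ^ c := one_le_pow₀ hL1'
  have hLc0 : 0 < L ^ c := by positivity
  have hD : 0 < D := by rw [hDdef]; positivity
  set Q := LL N ^ (2 * c) with hQd
  have hQ : 1 ≤ Q := Nat.one_le_pow _ _ hL1
  have hQr : (Q:ℝ) = L ^ (2 * c) := by rw [hQd]; push_cast; rfl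
  have hQ2 : (Q:ℝ) ^ 2 = L ^ (4 * c) := by rw [hQr, ← pow_mul]; congr 1; ring
  set ε := E / L ^ c with hε
  have hε0 : 0 ≤ ε := by positivity
  have hεE : ε ≤ E := div_le_self hE0 hLc
  set h : ℝ → ℂ := fun x => ∑ m ∈ SS Q, cf u v D m * ee (m * x) with hh
  have H1 : ∀ x, ‖((trap u v D x : ℝ) : ℂ) - h x‖ ≤ ε := by
    intro x
    have := tail _ _ (1 / D) Q hQ (hasSum_trap hD huv hu0 hv1 x) (by positivity) (by
      intro m hm
      rw [norm_mul, norm_ee, mul_one]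
      exact norm_cf_le1 hD hm)
    refine this.trans (le_of_eq ?_)
    rw [hε, hE, hQr, hDdef]
    field_simp
    rw [← pow_mul]; congr 1; ring
  have hg : ∀ x, ‖((trap u v D x : ℝ) : ℂ)‖ ≤ 1 := by
    intro x
    rw [Complex.norm_real, Real.norm_eq_abs, abs_of_nonneg (trap_nonneg hD huv x)]
    exact trap_le_one hD huv x
  have hI : (I31 N : ℝ) ≤ (N:ℝ) ^ 2 := by exact_mod_cast I31_le N
  have hI0 : (0:ℝ) ≤ I31 N := by positivity
  have H2 : ‖((Jt η u v D N : ℝ) : ℂ)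
      - ∑ t ∈ Tri N, h (η * t.1) * h (η * t.2.1) * h (η * t.2.2)‖
      ≤ (N:ℝ) ^ 2 * (ε * (1 + (1 + E) + (1 + E) ^ 2)) := by
    unfold Jt
    push_cast
    rw [← sum_sub_distrib]
    calc _ ≤ ∑ t ∈ Tri N, ε * (1 + (1 + E) + (1 + E) ^ 2) :=
          norm_sum_le_of_le _ fun t _ => prod3_diff hεE hε0 (hg _) (hg _) (hg _)
            (H1 _) (H1 _) (H1 _)
      _ = (I31 N : ℝ) * (ε * (1 + (1 + E) + (1 + E) ^ 2)) := by
          rw [sum_const, nsmul_eq_mul, card_Tri]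
      _ ≤ _ := by gcongr
  have hvu0 : 0 ≤ v - u - D := by linarith
  have hvu1 : v - u - D ≤ 1 := by linarith
  have cf1 : ∀ m : ℤ, ‖cf u v D m‖ ≤ 1 := by
    intro m
    by_cases hm : m = 0
    · subst hm; simp only [cf, if_true]
      rw [Complex.norm_real, Real.norm_eq_abs, abs_of_nonneg hvu0]; exact hvu1
    · refine (norm_cf_le2 hD hm).trans ?_
      have : 1 ≤ |(m:ℝ)| := by exact_mod_cast Int.one_le_abs hm
      rw [div_le_one (by linarith)]; exact this
  have H3 : ‖∑ t ∈ Tri N, h (η * t.1) * h (η * t.2.1) * h (η * t.2.2)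
      - ∑ m ∈ SS Q, cf u v D m ^ 3 * ((I31 N : ℂ) * ee (m * η * N))‖
      ≤ 27 * K1 * (N:ℝ) ^ 2 / L ^ c := by
    have e1 := expand_TT N η (SS Q) (cf u v D)
    have e2 : ∑ t ∈ Tri N, h (η * t.1) * h (η * t.2.1) * h (η * t.2.2) = _ := e1
    rw [e2]
    have mb : ∀ m ∈ SS Q, |(m:ℝ)| ≤ L ^ (4 * c) := by
      intro m hm
      rw [mem_SS] at hm
      rw [← hQ2]; exact_mod_cast hm
    have := diag_lemma (SS Q)
      (fun m1 m2 m3 => cf u v D m1 * cf u v D m2 * cf u v D m3 * TT N (m1 * η) (m2 * η) (m3 * η))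
      (K1 * (N:ℝ) ^ 2 / L ^ (13 * c)) (by
        intro m1 h1 m2 h2 m3 h3 hne
        have := off N hN m1 m2 m3 hne (mb _ h1) (mb _ h2) (mb _ h3)
        rw [norm_mul, norm_mul, norm_mul]
        have c3 : ‖cf u v D m1‖ * ‖cf u v D m2‖ * ‖cf u v D m3‖ ≤ 1 * 1 * 1 := by
          gcongr <;> exact cf1 _
        calc _ ≤ 1 * 1 * 1 * (K1 * (N:ℝ) ^ 2 / L ^ (13 * c)) := by gcongr
          _ = _ := by ring) (by positivity)
    have e3 : ∑ m ∈ SS Q, cf u v D m ^ 3 * ((I31 N : ℂ) * ee (m * η * N))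
        = ∑ m ∈ SS Q, cf u v D m * cf u v D m * cf u v D m * TT N (m * η) (m * η) (m * η) := by
      refine sum_congr rfl fun m _ => ?_
      rw [TT_diag]; ring
    rw [e3]
    refine this.trans ?_
    calc ((SS Q).card : ℝ) ^ 3 * (K1 * (N:ℝ) ^ 2 / L ^ (13 * c))
        ≤ (3 * (Q:ℝ) ^ 2) ^ 3 * (K1 * (N:ℝ) ^ 2 / L ^ (13 * c)) := by
          gcongr; exact card_SS hQ
      _ = 27 * K1 * (N:ℝ) ^ 2 / L ^ c := by
          rw [hQ2]
          have : L ^ (13 * c) = (L ^ (4 * c)) ^ 3 * L ^ c := by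
            rw [← pow_mul, ← pow_add]; congr 1; ring
          rw [this]; field_simp; ring
  have H4 : ‖∑ m ∈ SS Q, cf u v D m ^ 3 * ((I31 N : ℂ) * ee (m * η * N))
      - I31 N * sigmaSeries η a b N‖ ≤ (N:ℝ) ^ 2 * ((18 * D0 + 1) / L ^ c * W) := by
    have e : ∑ m ∈ SS Q, cf u v D m ^ 3 * ((I31 N : ℂ) * ee (m * η * N))
        = I31 N * ∑ m ∈ SS Q, cf u v D m ^ 3 * ee (m * η * N) := by
      rw [mul_sum]; refine sum_congr rfl fun m _ => ?_; ring
    rw [e, ← mul_sub, norm_mul, Complex.norm_natCast]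
    have := sigma_cmp (η := η) hD hab hab1 hu hv hvu0 hvu1 N Q hQ
    have hb : 18 * D + 1 / (Q:ℝ) ^ 2 ≤ (18 * D0 + 1) / L ^ c := by
      rw [hDdef, hQ2, add_div, mul_div_assoc]
      gcongr
      omega
    have hb2 : (18 * D + 1 / (Q:ℝ) ^ 2) * W ≤ (18 * D0 + 1) / L ^ c * W := by gcongr
    have := this.trans hb2
    gcongr
  have tri : ∀ x y z w : ℂ, ‖x - w‖ ≤ ‖x - y‖ + ‖y - z‖ + ‖z - w‖ := by
    intro x y z w
    have : x - w = (x - y) + (y - z) + (z - w) := by ring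
    rw [this]; exact norm_add₃_le
  refine (tri _ _ _ _).trans ((add_le_add (add_le_add H2 H3) H4).trans (le_of_eq ?_))
  rw [hε]; field_simp

lemma J31_sum (η a b : ℝ) (N : ℕ) : (J31 η a b N : ℝ) = ∑ t ∈ Tri N,
    (if a < Int.fract (η * t.1) ∧ Int.fract (η * t.1) < b then (1:ℝ) else 0) *
    (if a < Int.fract (η * t.2.1) ∧ Int.fract (η * t.2.1) < b then (1:ℝ) else 0) *
    (if a < Int.fract (η * t.2.2) ∧ Int.fract (η * t.2.2) < b then (1:ℝ) else 0) := by
  unfold J31 Tri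
  rw [← filter_filter, card_filter]
  push_cast
  refine sum_congr rfl fun t _ => ?_
  simp only [← ite_and, mul_ite, mul_one, mul_zero]
  split_ifs <;> first | rfl | (exfalso; tauto)

lemma J_lower {η a b D : ℝ} (hD : 0 < D) (h : a + D ≤ b - D) (N : ℕ) :
    Jt η a b D N ≤ J31 η a b N := by
  rw [J31_sum]
  unfold Jt
  have k : ∀ x, trap a b D x ≤ if a < Int.fract x ∧ Int.fract x < b then (1:ℝ) else 0 := by
    intro x
    split_ifs with hx
    · exact trap_le_one hD h x
    · exact (trap_zero hD h x hx).le
  have nn := trap_nonneg hD h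
  have nn2 : ∀ x : ℝ, (0:ℝ) ≤ if a < Int.fract x ∧ Int.fract x < b then (1:ℝ) else 0 := by
    intro x; split_ifs <;> norm_num
  refine sum_le_sum fun t _ => ?_
  exact mul_le_mul (mul_le_mul (k _) (k _) (nn _) (nn2 _)) (k _) (nn _)
    (mul_nonneg (nn2 _) (nn2 _))

lemma J_upper {η a b u v D : ℝ} (hD : 0 < D) (hu : u + D = a) (hv : v - D = b)
    (h : u + D ≤ v - D) (N : ℕ) :
    J31 η a b N ≤ Jt η u v D N := by
  rw [J31_sum]
  unfold Jt
  have nn := trap_nonneg hD h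
  have k : ∀ x, (if a < Int.fract x ∧ Int.fract x < b then (1:ℝ) else 0) ≤ trap u v D x := by
    intro x
    split_ifs with hx
    · exact (trap_one hD x (by linarith) (by linarith)).ge
    · exact nn x
  have nn2 : ∀ x : ℝ, (0:ℝ) ≤ if a < Int.fract x ∧ Int.fract x < b then (1:ℝ) else 0 := by
    intro x; split_ifs <;> norm_num
  refine sum_le_sum fun t _ => ?_
  exact mul_le_mul (mul_le_mul (k _) (k _) (nn2 _) (nn _)) (k _) (nn2 _)
    (mul_nonneg (nn _) (nn _))

theorem ternary_goldbach_special_primes (η : ℝ) (hη : IsQuadraticIrrational η)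
    (a b : ℝ) (ha : 0 < a) (hab : a < b) (hb : b < 1) (C : ℝ) (hC : 0 < C) :
    ∃ K > 0, ∀ N : ℕ, 2 ≤ N →
      ‖(J31 η a b N : ℂ) - (I31 N : ℂ) * sigmaSeries η a b N‖ ≤
        K * (N : ℝ) ^ 2 * Real.log N ^ (-C) := by
  set c := ⌈C⌉₊ with hc
  set D0 := min (min a (1 - b)) (b - a) / 4 with hD0d
  have hmin : 0 < min (min a (1 - b)) (b - a) := by
    apply lt_min (lt_min ha (by linarith)) (by linarith)
  have hD0 : 0 < D0 := by positivity
  have m1 : min (min a (1 - b)) (b - a) ≤ a := (min_le_left _ _).trans (min_le_left _ _)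
  have m2 : min (min a (1 - b)) (b - a) ≤ 1 - b := (min_le_left _ _).trans (min_le_right _ _)
  have m3 : min (min a (1 - b)) (b - a) ≤ b - a := min_le_right _ _
  obtain ⟨K, hK, est⟩ := smooth_est hη (a := a) (b := b) (by linarith) (by linarith) c hD0
  refine ⟨3 * K, by positivity, fun N hN => ?_⟩
  have hL1 := LL_one (N := N) (by omega)
  have hL1' : (1:ℝ) ≤ LL N := by exact_mod_cast hL1
  set D := D0 / (LL N : ℝ) ^ c with hDd
  have hD : 0 < D := by positivity
  have hDD0 : D ≤ D0 := div_le_self hD0.le (one_le_pow₀ hL1')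
  have e1 := est N hN a b D rfl (Or.inl rfl) (Or.inr rfl) (by linarith) ha.le hb
  have e2 := est N hN (a - D) (b + D) D rfl (Or.inr (by ring)) (Or.inl (by ring)) (by linarith)
    (by linarith) (by linarith)
  have lo := J_lower (η := η) (a := a) (b := b) hD (by linarith) N
  have up := J_upper (η := η) (a := a) (b := b) (u := a - D) (v := b + D) hD (by ring) (by ring)
    (by linarith) N
  set X : ℂ := (I31 N : ℂ) * sigmaSeries η a b N
  set j1 := Jt η a b D N
  set j2 := Jt η (a - D) (b + D) D N
  set B := K * (N:ℝ) ^ 2 / (LL N : ℝ) ^ c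
  have s1 : ‖(J31 η a b N : ℂ) - (j1 : ℂ)‖ ≤ j2 - j1 := by
    have : (J31 η a b N : ℂ) - (j1 : ℂ) = (((J31 η a b N : ℝ) - j1 : ℝ) : ℂ) := by push_cast; rfl
    rw [this, Complex.norm_real, Real.norm_eq_abs, abs_of_nonneg (by linarith)]
    linarith
  have s2 : j2 - j1 ≤ ‖(j2:ℂ) - X‖ + ‖(j1:ℂ) - X‖ := by
    have h : ((j2 - j1 : ℝ) : ℂ) = ((j2:ℂ) - X) - ((j1:ℂ) - X) := by push_cast; ring
    calc j2 - j1 ≤ ‖((j2 - j1 : ℝ) : ℂ)‖ := by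
          rw [Complex.norm_real, Real.norm_eq_abs]; exact le_abs_self _
      _ ≤ _ := by rw [h]; exact norm_sub_le _ _
  have s3 : ‖(J31 η a b N : ℂ) - X‖ ≤ 3 * B := by
    have h : (J31 η a b N : ℂ) - X = ((J31 η a b N : ℂ) - (j1 : ℂ)) + ((j1:ℂ) - X) := by ring
    rw [h]
    refine (norm_add_le _ _).trans ?_
    linarith
  refine s3.trans ?_
  have hlog : 0 < Real.log N := Real.log_pos (by exact_mod_cast (by omega : 1 < N))
  have hLlog : Real.log N ≤ LL N := by linarith [LL_ge N]
  have hp : Real.log N ^ C ≤ (LL N : ℝ) ^ c := by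
    calc Real.log N ^ C ≤ (LL N : ℝ) ^ C := Real.rpow_le_rpow hlog.le hLlog hC.le
      _ ≤ (LL N : ℝ) ^ (c : ℝ) := Real.rpow_le_rpow_of_exponent_le hL1' (Nat.le_ceil C)
      _ = _ := Real.rpow_natCast _ _
  rw [Real.rpow_neg hlog.le]
  have hpos : 0 < Real.log N ^ C := Real.rpow_pos_of_pos hlog C
  calc 3 * B = 3 * K * (N:ℝ) ^ 2 * ((LL N : ℝ) ^ c)⁻¹ := by simp only [B]; ring
    _ ≤ _ := by gcongr
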